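/- arXiv:1403.6399 — 6 statements merged into one kernel-verified Lean document; each statement's English description precedes it below -/
import Mathlib

section
/- Suppose that for each degree d ∈ ℕ, P_d is a d-feasible polynomial that minimizes the objective, i.e., ∫_B P_d dvol ≤ ∫_B Q dvol for every d-feasible polynomial Q. Let K_d = {x ∈ B : P_d(x) ≥ 1}. Then lim_{d→∞} vol(K_d \ K) = 0. -/
open MeasureTheory MvPolynomial Filter

/-- A real polynomial `P` in `n` variables is `d`-feasible (w.r.t. `B`, `K`) if its total
degree is at most `d`, `P ≥ 0` on `B` and `P ≥ 1` on `K`. -/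
def Feasible {n : ℕ} (B K : Set (Fin n → ℝ)) (d : ℕ) (P : MvPolynomial (Fin n) ℝ) : Prop :=
  P.totalDegree ≤ d ∧ (∀ x ∈ B, 0 ≤ eval x P) ∧ (∀ x ∈ K, 1 ≤ eval x P)

lemma exists_poly_near {n : ℕ} (B : Set (Fin n → ℝ)) (hB : IsCompact B) (f : C(Fin n → ℝ, ℝ))
    {ε : ℝ} (hε : 0 < ε) : ∃ Q : MvPolynomial (Fin n) ℝ, ∀ x ∈ B, |eval x Q - f x| < ε := by
  let φ : MvPolynomial (Fin n) ℝ →ₐ[ℝ] C(Fin n → ℝ, ℝ) :=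
    aeval (fun i => (⟨fun x => x i, continuous_apply i⟩ : C(Fin n → ℝ, ℝ)))
  have hφ : ∀ Q x, φ Q x = eval x Q := by
    intro Q x
    induction Q using MvPolynomial.induction_on with
    | C a => simp [φ]
    | add p q hp hq => simp [hp, hq]
    | mul_X p i hp => simp [hp]; left; simp [φ]
  have hsep : φ.range.SeparatesPoints := by
    intro x y hxy
    obtain ⟨i, hi⟩ := Function.ne_iff.mp hxy
    refine ⟨_, ⟨φ (X i), ⟨X i, rfl⟩, rfl⟩, ?_⟩
    simpa [hφ] using hi
  obtain ⟨g, ⟨Q, rfl⟩, hg⟩ :=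
    ContinuousMap.exists_mem_subalgebra_near_continuous_of_isCompact_of_separatesPoints hsep f hB hε
  refine ⟨Q, fun x hx => ?_⟩
  have := hg x hx
  rw [Real.norm_eq_abs] at this
  simpa [hφ] using this

lemma exists_poly_int {n : ℕ} (B K : Set (Fin n → ℝ)) (hB : IsCompact B) (hK : IsClosed K)
    (hKB : K ⊆ B) {ε : ℝ} (hε : 0 < ε) : ∃ Q : MvPolynomial (Fin n) ℝ,
    (∀ x ∈ B, 0 ≤ eval x Q) ∧ (∀ x ∈ K, 1 ≤ eval x Q) ∧
    ∫ x in B, eval x Q < volume.real K + ε := by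
  have : IsFiniteMeasure (volume.restrict B) := ⟨by simpa using hB.measure_lt_top⟩
  have ht := tendsto_integral_thickenedIndicator_of_isClosed (volume.restrict B) hK
    (δs := fun n : ℕ => (1 : ℝ) / (n + 1))
    (fun _ => Nat.one_div_pos_of_nat) tendsto_one_div_add_atTop_nhds_zero_nat
  have hr : (volume.restrict B).real K = volume.real K := by
    rw [measureReal_restrict_apply hK.measurableSet, Set.inter_eq_left.mpr hKB]
  rw [hr] at ht
  obtain ⟨m, hm⟩ := (ht.eventually (gt_mem_nhds (show volume.real K < volume.real K + ε / 2 by linarith))).exists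
  have hpos : (0 : ℝ) < 1 / ((m : ℝ) + 1) := Nat.one_div_pos_of_nat
  let f : C(Fin n → ℝ, ℝ) := ⟨fun x => (thickenedIndicator hpos K x : ℝ), by fun_prop⟩
  have hf0 : ∀ x, 0 ≤ f x := fun x => NNReal.coe_nonneg _
  have hf1 : ∀ x ∈ K, f x = 1 := fun x hx => by
    change ((thickenedIndicator hpos K x : NNReal) : ℝ) = 1
    rw [thickenedIndicator_one hpos K hx]; rfl
  have hfm : ∫ x in B, f x < volume.real K + ε / 2 := hm
  set V := volume.real B with hV
  have hV0 : 0 ≤ V := measureReal_nonneg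
  set η := ε / (4 * (V + 1)) with hη
  have hη0 : 0 < η := by positivity
  have hηV : 2 * η * V ≤ ε / 2 := by
    rw [hη]
    have : 2 * (ε / (4 * (V + 1))) * V = ε / 2 * (V / (V + 1)) := by field_simp; norm_num
    rw [this]
    have h2 : V / (V + 1) ≤ 1 := by rw [div_le_one (by linarith)]; linarith
    nlinarith
  obtain ⟨Q, hQ⟩ := exists_poly_near B hB (f + ContinuousMap.const _ η) hη0
  have hQ' : ∀ x ∈ B, f x ≤ eval x Q ∧ eval x Q ≤ f x + 2 * η := by
    intro x hx
    have := abs_lt.mp (hQ x hx)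
    simp only [ContinuousMap.add_apply, ContinuousMap.const_apply] at this
    constructor <;> linarith
  refine ⟨Q, fun x hx => (hf0 x).trans (hQ' x hx).1,
    fun x hx => (hf1 x hx).symm.le.trans (hQ' x (hKB hx)).1, ?_⟩
  have hfi : IntegrableOn (fun x => f x) B := f.continuous.continuousOn.integrableOn_compact hB
  have hQi : IntegrableOn (fun x => eval x Q) B :=
    (MvPolynomial.continuous_eval Q).continuousOn.integrableOn_compact hB
  have h1 : ∫ x in B, eval x Q ≤ ∫ x in B, (f x + 2 * η) :=
    setIntegral_mono_on hQi (hfi.add (integrable_const _)) hB.measurableSet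
      (fun x hx => (hQ' x hx).2)
  have h2 : ∫ x in B, (f x + 2 * η) = (∫ x in B, f x) + 2 * η * V := by
    rw [integral_add hfi (integrable_const _), setIntegral_const, smul_eq_mul, mul_comm V]
  linarith

theorem stmt_0 {n : ℕ} (B K : Set (Fin n → ℝ)) (hB : IsCompact B) (hK : IsClosed K)
    (hKB : K ⊆ B) (P : ℕ → MvPolynomial (Fin n) ℝ)
    (hfeas : ∀ d, Feasible B K d (P d))
    (hmin : ∀ d, ∀ Q : MvPolynomial (Fin n) ℝ, Feasible B K d Q →
      ∫ x in B, eval x (P d) ≤ ∫ x in B, eval x Q) :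
    Tendsto (fun d => volume ({x ∈ B | 1 ≤ eval x (P d)} \ K)) atTop (nhds 0) := by
  have : IsFiniteMeasure (volume.restrict B) := ⟨by simpa using hB.measure_lt_top⟩
  have hsub : ∀ d, {x ∈ B | 1 ≤ eval x (P d)} ⊆ B := fun d x hx => hx.1
  have hfin : ∀ d, volume {x ∈ B | 1 ≤ eval x (P d)} ≠ ⊤ := fun d =>
    ((measure_mono (hsub d)).trans_lt hB.measure_lt_top).ne
  rw [ENNReal.tendsto_atTop_zero]
  intro ε hε
  by_cases hεt : ε = ⊤
  · exact ⟨0, fun _ _ => by simp [hεt]⟩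
  have hε' : 0 < ε.toReal := ENNReal.toReal_pos hε.ne' hεt
  obtain ⟨Q, hQ0, hQ1, hQ⟩ := exists_poly_int B K hB hK hKB hε'
  refine ⟨Q.totalDegree, fun d hd => ?_⟩
  have h1 := hmin d Q ⟨hd, hQ0, hQ1⟩
  have hPi : IntegrableOn (fun x => eval x (P d)) B :=
    (MvPolynomial.continuous_eval (P d)).continuousOn.integrableOn_compact hB
  have hnn : 0 ≤ᵐ[volume.restrict B] fun x => eval x (P d) := by
    filter_upwards [ae_restrict_mem hB.measurableSet] with x hx using (hfeas d).2.1 x hx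
  have h2 := mul_meas_ge_le_integral_of_nonneg hnn hPi 1
  have hmeas : MeasurableSet {x | 1 ≤ eval x (P d)} :=
    (isClosed_le continuous_const (MvPolynomial.continuous_eval (P d))).measurableSet
  have hset : {x | 1 ≤ eval x (P d)} ∩ B = {x ∈ B | 1 ≤ eval x (P d)} := by
    ext x; simp [and_comm]
  rw [one_mul, measureReal_restrict_apply hmeas, hset] at h2
  have hKs : K ⊆ {x ∈ B | 1 ≤ eval x (P d)} := fun x hx => ⟨hKB hx, (hfeas d).2.2 x hx⟩
  have h3 := measureReal_sdiff hKs hK.measurableSet (μ := volume)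
    (hfin d)
  have hfin' : volume ({x ∈ B | 1 ≤ eval x (P d)} \ K) ≠ ⊤ :=
    ((measure_mono Set.sdiff_subset).trans_lt (hfin d).lt_top).ne
  rw [← ENNReal.toReal_le_toReal hfin' hεt]
  change volume.real _ ≤ _
  linarith
end

section
/- Suppose that for each degree d ∈ ℕ, P_d is a d-feasible polynomial that minimizes the objective, i.e., ∫_B P_d dvol ≤ ∫_B Q dvol for every d-feasible polynomial Q. Then ∫_B |P_d(x) − 𝟙_K(x)| dvol(x) → 0 as d → ∞, where 𝟙_K denotes the indicator function of K. -/
open MeasureTheory MvPolynomial Filter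

theorem poly_approx {n : ℕ} (B : Set (Fin n → ℝ)) (hB : IsCompact B) (f : C(Fin n → ℝ, ℝ))
    {ε : ℝ} (hε : 0 < ε) :
    ∃ q : MvPolynomial (Fin n) ℝ, ∀ x ∈ B, |eval x q - f x| < ε := by
  let φ : MvPolynomial (Fin n) ℝ →ₐ[ℝ] C(Fin n → ℝ, ℝ) :=
    aeval (fun i => (⟨fun x => x i, continuous_apply i⟩ : C(Fin n → ℝ, ℝ)))
  have hφ : ∀ q x, φ q x = eval x q := by
    intro q x
    induction q using MvPolynomial.induction_on with
    | C a => simp [φ]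
    | add p q hp hq => simp [hp, hq]
    | mul_X p i hp =>
      rw [map_mul, map_mul, ContinuousMap.mul_apply, hp]
      simp [φ]
  have hsep : φ.range.SeparatesPoints := by
    intro x y hxy
    obtain ⟨i, hi⟩ := Function.ne_iff.mp hxy
    refine ⟨φ (X i), ⟨φ (X i), ⟨X i, rfl⟩, rfl⟩, ?_⟩
    simpa [hφ] using hi
  obtain ⟨g, ⟨q, rfl⟩, hg⟩ :=
    ContinuousMap.exists_mem_subalgebra_near_continuous_of_isCompact_of_separatesPoints
      hsep f hB hε
  refine ⟨q, fun x hx => ?_⟩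
  have := hg x hx
  rw [← hφ]
  simpa [Real.norm_eq_abs] using this

theorem stmt_1 {n : ℕ} (B K : Set (Fin n → ℝ)) (hB : IsCompact B) (hK : IsClosed K)
    (hKB : K ⊆ B) (P : ℕ → MvPolynomial (Fin n) ℝ)
    (hfeas : ∀ d, Feasible B K d (P d))
    (hmin : ∀ d, ∀ Q : MvPolynomial (Fin n) ℝ, Feasible B K d Q →
      ∫ x in B, eval x (P d) ≤ ∫ x in B, eval x Q) :
    Tendsto (fun d => ∫ x in B, |eval x (P d) - K.indicator (fun _ => (1 : ℝ)) x|)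
      atTop (nhds 0) := by
  have : IsFiniteMeasure (volume.restrict B) :=
    ⟨by rw [Measure.restrict_apply_univ]; exact hB.measure_lt_top⟩
  have hPint : ∀ Q : MvPolynomial (Fin n) ℝ,
      Integrable (fun x => eval x Q) (volume.restrict B) := fun Q =>
    (MvPolynomial.continuous_eval Q).continuousOn.integrableOn_compact hB
  have hKint : Integrable (K.indicator (fun _ => (1 : ℝ))) (volume.restrict B) :=
    (integrable_const 1).indicator hK.measurableSet
  have hKI : ∫ x in B, K.indicator (fun _ => (1 : ℝ)) x = (volume.restrict B).real K := by
    rw [integral_indicator hK.measurableSet]; simp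
  have habs : ∀ d, ∫ x in B, |eval x (P d) - K.indicator (fun _ => (1 : ℝ)) x|
      = (∫ x in B, eval x (P d)) - (volume.restrict B).real K := by
    intro d
    have e : ∫ x in B, |eval x (P d) - K.indicator (fun _ => (1 : ℝ)) x|
        = ∫ x in B, (eval x (P d) - K.indicator (fun _ => (1 : ℝ)) x) := by
      refine setIntegral_congr_fun hB.isClosed.measurableSet (fun x hx => ?_)
      refine abs_of_nonneg ?_
      by_cases hxK : x ∈ K
      · simpa [hxK] using (hfeas d).2.2 x hxK
      · simpa [hxK] using (hfeas d).2.1 x hx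
    rw [e, integral_sub (hPint _) hKint, hKI]
  rw [Metric.tendsto_atTop]
  intro ε hε
  have hlim := tendsto_integral_thickenedIndicator_of_isClosed (volume.restrict B) hK
    (δs := fun m : ℕ => (1 : ℝ) / (m + 1)) (fun _ => Nat.one_div_pos_of_nat)
    tendsto_one_div_add_atTop_nhds_zero_nat
  obtain ⟨m, hm⟩ := (hlim.eventually (gt_mem_nhds
    (show (volume.restrict B).real K < (volume.restrict B).real K + ε / 2 by linarith))).exists
  have hpos : (0 : ℝ) < 1 / ((m : ℝ) + 1) := Nat.one_div_pos_of_nat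
  let f : C(Fin n → ℝ, ℝ) := ⟨fun x => (thickenedIndicator hpos K x : ℝ), by fun_prop⟩
  have hfint : Integrable (fun x => f x) (volume.restrict B) :=
    integrable_thickenedIndicator K hpos
  have hm' : ∫ x in B, f x < (volume.restrict B).real K + ε / 2 := hm
  set V := (volume.restrict B).real Set.univ with hV
  have hV0 : 0 ≤ V := measureReal_nonneg
  let δ : ℝ := ε / (4 * (V + 1))
  have hδ : 0 < δ := by positivity
  have hδV : 2 * δ * V < ε / 2 := by
    have : δ * (4 * (V + 1)) = ε := by
      simp only [δ]; field_simp
    nlinarith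
  obtain ⟨q, hq⟩ := poly_approx B hB f hδ
  have hQe : ∀ x, eval x (q + C δ) = eval x q + δ := fun x => by simp
  have hQint : ∫ x in B, eval x (q + C δ) ≤ (∫ x in B, f x) + 2 * δ * V := by
    have e : ∫ x in B, (f x + 2 * δ) = (∫ x in B, f x) + 2 * δ * V := by
      rw [integral_add hfint (integrable_const _), integral_const, smul_eq_mul, mul_comm]
    rw [← e]
    refine setIntegral_mono_on (hPint _) (hfint.add (integrable_const _))
      hB.isClosed.measurableSet (fun x hx => ?_)
    have := abs_lt.mp (hq x hx)
    rw [hQe]; linarith [this.2]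
  refine ⟨(q + C δ).totalDegree, fun d hd => ?_⟩
  have hF : Feasible B K d (q + C δ) := by
    refine ⟨hd, fun x hx => ?_, fun x hx => ?_⟩
    · have := abs_lt.mp (hq x hx)
      have h0 : 0 ≤ f x := NNReal.coe_nonneg _
      rw [hQe]; linarith [this.1]
    · have := abs_lt.mp (hq x (hKB hx))
      have h0 : f x = 1 := by
        change ((thickenedIndicator hpos K x : NNReal) : ℝ) = 1
        rw [thickenedIndicator_one hpos K hx]; rfl
      rw [hQe]; linarith [this.1]
  have h1 := hmin d _ hF
  have h2 : 0 ≤ ∫ x in B, |eval x (P d) - K.indicator (fun _ => (1 : ℝ)) x| :=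
    integral_nonneg fun x => abs_nonneg _
  rw [Real.dist_eq, sub_zero, abs_of_nonneg h2, habs]
  linarith
end

section
/- For every ε > 0 there exist a degree d ∈ ℕ and a d-feasible polynomial P such that ∫_B P dvol ≤ vol(K) + ε. -/
open MeasureTheory MvPolynomial

theorem aux_sw {n : ℕ} (B : Set (Fin n → ℝ)) (hB : IsCompact B) (f : C(Fin n → ℝ, ℝ))
    (δ : ℝ) (hδ : 0 < δ) :
    ∃ Q : MvPolynomial (Fin n) ℝ, ∀ x ∈ B, ‖eval x Q - f x‖ < δ := by
  let φ : MvPolynomial (Fin n) ℝ →ₐ[ℝ] C(Fin n → ℝ, ℝ) :=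
    MvPolynomial.aeval (fun i => (⟨fun x => x i, continuous_apply i⟩ : C(Fin n → ℝ, ℝ)))
  have hφ : ∀ Q x, φ Q x = eval x Q := by
    intro Q x
    induction Q using MvPolynomial.induction_on with
    | C a => simp [φ]
    | add p q hp hq => simp [map_add, hp, hq]
    | mul_X p i hp => rw [map_mul, ContinuousMap.mul_apply, hp]; simp [φ]
  have hsep : φ.range.SeparatesPoints := by
    intro x y hxy
    obtain ⟨i, hi⟩ := Function.ne_iff.mp hxy
    refine ⟨_, ⟨φ (X i), ⟨X i, rfl⟩, rfl⟩, ?_⟩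
    simpa [hφ] using hi
  obtain ⟨g, ⟨Q, rfl⟩, hg⟩ :=
    ContinuousMap.exists_mem_subalgebra_near_continuous_of_isCompact_of_separatesPoints
      hsep f hB hδ
  refine ⟨Q, fun x hx => ?_⟩
  have := hg x hx
  rwa [← hφ]

theorem stmt_2 {n : ℕ} (B K : Set (Fin n → ℝ)) (hB : IsCompact B) (hK : IsClosed K)
    (hKB : K ⊆ B) :
    ∀ ε : ℝ, 0 < ε → ∃ d : ℕ, ∃ P : MvPolynomial (Fin n) ℝ, Feasible B K d P ∧
      ∫ x in B, eval x P ≤ (volume (K ∩ B)).toReal + ε := by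
  intro ε hε
  have hKc : IsCompact K := hB.of_isClosed_subset hK hKB
  have hKf : volume K ≠ ⊤ := hKc.measure_lt_top.ne
  obtain ⟨U, hKU, hU, hvU⟩ := K.exists_isOpen_lt_add (μ := volume) hKf
    (ε := ENNReal.ofReal (ε / 2)) (by simpa using hε)
  obtain ⟨f, hf0, hf1, hf⟩ := exists_continuous_zero_one_of_isClosed hU.isClosed_compl hK
    (Set.disjoint_left.mpr fun x hx hx' => hx (hKU hx'))
  set V := (volume B).toReal with hV
  have hV0 : 0 ≤ V := ENNReal.toReal_nonneg
  set δ := ε / (4 * (V + 1)) with hδ'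
  have hδ : 0 < δ := by positivity
  obtain ⟨Q, hQ⟩ := aux_sw B hB f δ hδ
  have hQ' : ∀ x ∈ B, f x ≤ eval x Q + δ ∧ eval x Q + δ ≤ f x + 2 * δ := by
    intro x hx
    have := abs_lt.mp (hQ x hx)
    constructor <;> linarith
  refine ⟨_, Q + C δ, ⟨le_rfl, fun x hx => ?_, fun x hx => ?_⟩, ?_⟩
  · have := hQ' x hx
    have := (hf x).1
    simp; linarith
  · have := hQ' x (hKB hx)
    have := hf1 hx
    simp at this ⊢; linarith
  · have hUB : volume (U ∩ B) ≠ ⊤ :=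
      ((measure_mono Set.inter_subset_right).trans_lt hB.measure_lt_top).ne
    have hiU : IntegrableOn (U.indicator (fun _ => (1 : ℝ))) B volume := by
      apply IntegrableOn.indicator _ hU.measurableSet
      exact integrableOn_const hB.measure_lt_top.ne
    have hic : IntegrableOn (fun _ => 2 * δ) B volume := integrableOn_const hB.measure_lt_top.ne
    have h1 : ∫ x in B, eval x (Q + C δ) ≤ ∫ x in B, (U.indicator (fun _ => (1 : ℝ)) x + 2 * δ) := by
      apply setIntegral_mono_on
      · exact (MvPolynomial.continuous_eval _).continuousOn.integrableOn_compact hB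
      · exact hiU.add hic
      · exact hB.measurableSet
      · intro x hx
        have h := (hQ' x hx).2
        have hfx : f x ≤ U.indicator (fun _ => (1 : ℝ)) x := by
          by_cases hxU : x ∈ U
          · simpa [hxU] using (hf x).2
          · have := hf0 hxU
            simp at this
            simp [hxU, this]
        simp; linarith
    have h2 : ∫ x in B, (U.indicator (fun _ => (1 : ℝ)) x + 2 * δ)
        = (volume (U ∩ B)).toReal + V * (2 * δ) := by
      rw [integral_add hiU hic, integral_indicator hU.measurableSet,
        Measure.restrict_restrict hU.measurableSet]
      simp [Measure.real, hV]
    have h3 : (volume (U ∩ B)).toReal ≤ (volume K).toReal + ε / 2 := by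
      have := ENNReal.toReal_mono (by finiteness)
        ((measure_mono (Set.inter_subset_left : U ∩ B ⊆ U)).trans hvU.le)
      rwa [ENNReal.toReal_add hKf (by finiteness), ENNReal.toReal_ofReal (by positivity)] at this
    have h4 : V * (2 * δ) ≤ ε / 2 := by
      rw [hδ']
      have : V * (2 * (ε / (4 * (V + 1)))) = (ε / 2) * (V / (V + 1)) := by field_simp; ring
      rw [this]
      have : V / (V + 1) ≤ 1 := by rw [div_le_one (by positivity)]; linarith
      nlinarith
    rw [Set.inter_eq_left.mpr hKB]
    linarith
end

section
/- Suppose K with defining polynomials g₁,…,g_l satisfies Putinar's property. If f ∈ ℝ[x₁,…,xₙ] satisfies f(x) > 0 for all x ∈ K, then there exist SOS polynomials τ₀, τ₁, …, τ_l such that f = τ₀ + Σ_{j=1}^l τ_j g_j. -/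
open MvPolynomial

/-- `K = {x : gⱼ(x) ≥ 0, j = 1,…,l}`, with the defining polynomials `g`, satisfies
Putinar's property if there are SOS polynomials `σ₀, σ₁, …, σ_l` such that
`{x : σ₀(x) + Σⱼ σⱼ(x) gⱼ(x) ≥ 0}` is compact. -/
def PutinarProperty {n l : ℕ} (g : Fin l → MvPolynomial (Fin n) ℝ) : Prop :=
  ∃ σ₀ : MvPolynomial (Fin n) ℝ, ∃ σ : Fin l → MvPolynomial (Fin n) ℝ,
    IsSumSq σ₀ ∧ (∀ j, IsSumSq (σ j)) ∧
    IsCompact {x : Fin n → ℝ | 0 ≤ eval x (σ₀ + ∑ j, σ j * g j)}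

open scoped Polynomial
set_option linter.unusedSectionVars false

def PIVT (L : Type*) [Field L] [LinearOrder L] : Prop :=
  ∀ (f : L[X]) (a b : L), a < b → f.eval a < 0 → 0 < f.eval b →
    ∃ c, a < c ∧ c < b ∧ f.eval c = 0

section rcf
variable {L : Type*} [Field L] [LinearOrder L] [IsStrictOrderedRing L]

lemma PIVT.mul_neg (h : PIVT L) (f : L[X]) {a b : L} (hab : a < b)
    (hf : f.eval a * f.eval b < 0) : ∃ c, a < c ∧ c < b ∧ f.eval c = 0 := by
  rcases mul_neg_iff.1 hf with ⟨h1, h2⟩ | ⟨h1, h2⟩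
  · obtain ⟨c, hc⟩ := h (-f) a b hab (by simpa using h1) (by simpa using h2)
    exact ⟨c, by simpa using hc⟩
  · exact h f a b hab h1 h2

lemma PIVT.rolle0 (h : PIVT L) (p : L[X]) {a b : L} (hab : a < b)
    (ha : p.eval a = 0) (hb : p.eval b = 0)
    (hno : ∀ x, a < x → x < b → p.eval x ≠ 0) :
    ∃ c, a < c ∧ c < b ∧ p.derivative.eval c = 0 := by
  have hp : p ≠ 0 := by
    rintro rfl
    obtain ⟨x, hx1, hx2⟩ := exists_between hab
    exact hno x hx1 hx2 (by simp)
  obtain ⟨q, hq, hqd⟩ := Polynomial.exists_eq_pow_rootMultiplicity_mul_and_not_dvd p hp a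
  set m := p.rootMultiplicity a with hm
  have hq0 : q ≠ 0 := by rintro rfl; simp at hqd
  obtain ⟨r, hr, hrd⟩ := Polynomial.exists_eq_pow_rootMultiplicity_mul_and_not_dvd q hq0 b
  set k := q.rootMultiplicity b with hk
  have hqa : q.eval a ≠ 0 := by rwa [Polynomial.dvd_iff_isRoot] at hqd
  have hrb : r.eval b ≠ 0 := by rwa [Polynomial.dvd_iff_isRoot] at hrd
  have hra : r.eval a ≠ 0 := by
    intro h0; apply hqa; rw [hr]; simp [h0]
  have hm0 : m ≠ 0 := (Polynomial.rootMultiplicity_pos hp |>.2 ha).ne'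
  have hqb : q.eval b = 0 := by
    rw [hq] at hb
    simp only [Polynomial.eval_mul, Polynomial.eval_pow, Polynomial.eval_sub, Polynomial.eval_X,
      Polynomial.eval_C, mul_eq_zero] at hb
    rcases hb with hb | hb
    · exact absurd (pow_eq_zero_iff hm0 |>.1 hb) (sub_pos.2 hab).ne'
    · exact hb
  have hk0 : k ≠ 0 := (Polynomial.rootMultiplicity_pos hq0 |>.2 hqb).ne'
  obtain ⟨m', hm'⟩ := Nat.exists_eq_succ_of_ne_zero hm0
  obtain ⟨k', hk'⟩ := Nat.exists_eq_succ_of_ne_zero hk0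
  have hpe : p = (Polynomial.X - Polynomial.C a) ^ (m' + 1) *
      ((Polynomial.X - Polynomial.C b) ^ (k' + 1) * r) := by
    rw [← Nat.succ_eq_add_one, ← Nat.succ_eq_add_one, ← hm', ← hk', ← hr, ← hq]
  have hpos : 0 < r.eval a * r.eval b := by
    by_contra hn
    have : r.eval a * r.eval b < 0 := lt_of_le_of_ne (not_lt.1 hn) (mul_ne_zero hra hrb)
    obtain ⟨c, h1, h2, h3⟩ := h.mul_neg r hab this
    exact hno c h1 h2 (by rw [hpe]; simp [h3])
  set s : L[X] := Polynomial.C ((m' : L) + 1) * (Polynomial.X - Polynomial.C b) * r +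
    Polynomial.C ((k' : L) + 1) * (Polynomial.X - Polynomial.C a) * r +
    (Polynomial.X - Polynomial.C a) * (Polynomial.X - Polynomial.C b) * r.derivative with hs
  have hder : p.derivative = (Polynomial.X - Polynomial.C a) ^ m' *
      (Polynomial.X - Polynomial.C b) ^ k' * s := by
    rw [hpe, hs]
    simp only [Polynomial.derivative_mul, Polynomial.derivative_X_sub_C_pow, Nat.cast_add,
      Nat.cast_one, Nat.add_sub_cancel, map_add, Polynomial.C_1, map_natCast]
    ring
  have hsneg : s.eval a * s.eval b < 0 := by
    have e1 : s.eval a = -(((m' : L) + 1) * (b - a) * r.eval a) := by simp [hs]; ring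
    have e2 : s.eval b = (((k' : L) + 1) * (b - a) * r.eval b) := by simp [hs]
    rw [e1, e2]
    have h1 : (0 : L) < (m' : L) + 1 := by positivity
    have h2 : (0 : L) < (k' : L) + 1 := by positivity
    have h3 : 0 < b - a := sub_pos.2 hab
    have : 0 < (((m' : L) + 1) * (b - a)) * (((k' : L) + 1) * (b - a)) * (r.eval a * r.eval b) := by
      positivity
    linarith [this, show -(((m' : L) + 1) * (b - a) * r.eval a) * (((k' : L) + 1) * (b - a) * r.eval b) =
      -((((m' : L) + 1) * (b - a)) * (((k' : L) + 1) * (b - a)) * (r.eval a * r.eval b)) by ring]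
  obtain ⟨c, h1, h2, h3⟩ := h.mul_neg s hab hsneg
  exact ⟨c, h1, h2, by rw [hder]; simp [h3]⟩

lemma PIVT.rolle (h : PIVT L) (p : L[X]) {a b : L} (hab : a < b)
    (ha : p.eval a = 0) (hb : p.eval b = 0) :
    ∃ c, a < c ∧ c < b ∧ p.derivative.eval c = 0 := by
  classical
  by_cases hp : p = 0
  · obtain ⟨x, hx1, hx2⟩ := exists_between hab
    exact ⟨x, hx1, hx2, by simp [hp]⟩
  set S := p.roots.toFinset.filter (fun x => a < x ∧ x ≤ b) with hS
  have hne : S.Nonempty := ⟨b, by simp [hS, hp, hab, hb]⟩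
  have hmem := S.min'_mem hne
  set b' := S.min' hne with hb'
  simp only [hS, Finset.mem_filter, Multiset.mem_toFinset, Polynomial.mem_roots hp,
    Polynomial.IsRoot.def] at hmem
  obtain ⟨c, h1, h2, h3⟩ := h.rolle0 p hmem.2.1 ha hmem.1 (by
    intro x hx1 hx2 hx
    have : x ∈ S := by
      simp only [hS, Finset.mem_filter, Multiset.mem_toFinset, Polynomial.mem_roots hp,
        Polynomial.IsRoot.def]
      exact ⟨hx, hx1, (hx2.trans_le hmem.2.2).le⟩
    exact absurd (S.min'_le x this) (not_le.2 hx2))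
  exact ⟨c, h1, h2.trans_le hmem.2.2, h3⟩

lemma PIVT.mono (h : PIVT L) (p : L[X]) {a b : L} (hab : a < b)
    (hd : ∀ x, a < x → x < b → 0 < p.derivative.eval x) : p.eval a < p.eval b := by
  have h3 : 0 < b - a := sub_pos.2 hab
  set t := (p.eval b - p.eval a) / (b - a) with ht
  obtain ⟨c, h1, h2, hc⟩ := h.rolle (p - Polynomial.C (p.eval a) -
    Polynomial.C t * (Polynomial.X - Polynomial.C a)) hab (by simp) (by
      simp [ht]; field_simp; ring)
  have := hd c h1 h2
  simp at hc
  have ht0 : 0 < t := by linarith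
  have := mul_pos ht0 h3
  rw [ht, div_mul_cancel₀ _ h3.ne'] at this
  linarith

lemma poly_large (n : ℕ) : ∀ (f : L[X]), f.natDegree = n + 1 → 0 < f.leadingCoeff →
    ∀ B : L, ∃ M, ∀ x, M ≤ x → B ≤ f.eval x := by
  induction n with
  | zero =>
    intro f hf hl B
    rw [Polynomial.eq_X_add_C_of_natDegree_le_one hf.le]
    rw [Polynomial.leadingCoeff, hf] at hl
    simp only [zero_add] at hl
    refine ⟨(B - f.coeff 0) / f.coeff 1, fun x hx => ?_⟩
    rw [div_le_iff₀ hl] at hx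
    simp; linarith
  | succ n ih =>
    intro f hf hl B
    have hg : f.divX.natDegree = n + 1 := by rw [Polynomial.natDegree_divX_eq_natDegree_tsub_one, hf]; rfl
    have hgl : 0 < f.divX.leadingCoeff := by
      rw [Polynomial.leadingCoeff, hg, Polynomial.coeff_divX]
      rwa [Polynomial.leadingCoeff, hf] at hl
    obtain ⟨M, hM⟩ := ih f.divX hg hgl 1
    refine ⟨max M (max 0 (B - f.coeff 0)), fun x hx => ?_⟩
    simp only [max_le_iff] at hx
    have h1 := hM x hx.1
    rw [← Polynomial.divX_mul_X_add f]
    simp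
    nlinarith [mul_le_mul_of_nonneg_right h1 hx.2.1]

lemma poly_pos_right (f : L[X]) (l : L) (hd : ∀ x, l < x → 0 < f.derivative.eval x) :
    ∃ x, l < x ∧ 0 < f.eval x := by
  have hf : f.natDegree ≠ 0 := by
    intro h0
    rw [Polynomial.eq_C_of_natDegree_eq_zero h0] at hd
    have := hd (l + 1) (by linarith)
    simp at this
  obtain ⟨n, hn⟩ := Nat.exists_eq_succ_of_ne_zero hf
  have hl : f.leadingCoeff ≠ 0 := by
    rw [Ne, Polynomial.leadingCoeff_eq_zero]; rintro rfl; simp at hf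
  rcases lt_or_gt_of_ne hl with hl | hl
  · exfalso
    have hdd : (-f.derivative).natDegree = n := by
      rw [Polynomial.natDegree_neg, Polynomial.natDegree_derivative, hn]; rfl
    have hdl : 0 < (-f.derivative).leadingCoeff := by
      rw [Polynomial.leadingCoeff, hdd, Polynomial.coeff_neg, Polynomial.coeff_derivative]
      rw [Polynomial.leadingCoeff, hn] at hl
      have : (0 : L) < (n : L) + 1 := by positivity
      have := mul_neg_of_neg_of_pos hl this
      simpa using this
    cases n with
    | zero =>
      have h1 := hd (l + 1) (by linarith)
      rw [Polynomial.leadingCoeff, hdd] at hdl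
      rw [Polynomial.eq_C_of_natDegree_eq_zero (p := f.derivative) (by simpa using hdd)] at h1
      simp at h1 hdl
      linarith
    | succ n =>
      obtain ⟨M, hM⟩ := poly_large n _ hdd hdl 0
      have h1 := hM (max M (l + 1)) (le_max_left _ _)
      have h2 := hd (max M (l + 1)) (lt_of_lt_of_le (by linarith) (le_max_right _ _))
      simp only [Polynomial.eval_neg] at h1
      linarith
  · obtain ⟨M, hM⟩ := poly_large n f hn hl 1
    exact ⟨max M (l + 1), lt_of_lt_of_le (by linarith) (le_max_right _ _),
      lt_of_lt_of_le one_pos (hM _ (le_max_left _ _))⟩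

lemma poly_neg_left (f : L[X]) (u : L) (hd : ∀ x, x < u → 0 < f.derivative.eval x) :
    ∃ x, x < u ∧ f.eval x < 0 := by
  obtain ⟨x, hx, h⟩ := poly_pos_right (-(f.comp (-Polynomial.X))) (-u) (by
    intro x hx
    have := hd (-x) (by linarith)
    simpa [Polynomial.derivative_comp] using this)
  exact ⟨-x, by linarith, by simpa using h⟩
end rcf

section cells
variable {L₁ L₂ : Type} [Field L₁] [LinearOrder L₁] [IsStrictOrderedRing L₁]
  [Field L₂] [LinearOrder L₂] [IsStrictOrderedRing L₂]

def CSim (Z : Set (L₁ × L₂)) (x : L₁) (y : L₂) : Prop :=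
  ∀ p ∈ Z, (x < p.1 ↔ y < p.2) ∧ (p.1 < x ↔ p.2 < y)

def COrd (Z : Set (L₁ × L₂)) : Prop := ∀ p ∈ Z, ∀ q ∈ Z, p.1 < q.1 ↔ p.2 < q.2

structure CCell (Z : Set (L₁ × L₂)) (f₁ : L₁[X]) (f₂ : L₂[X]) (x : L₁) (y : L₂) : Prop where
  fin : Z.Finite
  ord : COrd Z
  sim : CSim Z x y
  out : ∀ p ∈ Z, p.1 ≠ x
  d₁ : ∀ x', CSim Z x' y → 0 < f₁.derivative.eval x'
  d₂ : ∀ y', CSim Z x y' → 0 < f₂.derivative.eval y'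
  pos : ∀ p ∈ Z, 0 < f₁.eval p.1 ↔ 0 < f₂.eval p.2
  neg : ∀ p ∈ Z, f₁.eval p.1 < 0 ↔ f₂.eval p.2 < 0
  root : ∀ x₀ y₀, CSim Z x₀ y → CSim Z x y₀ → f₁.eval x₀ = 0 → f₂.eval y₀ = 0 →
    (x₀ < x ↔ y₀ < y) ∧ (x < x₀ ↔ y < y₀)

lemma CSim.swap {Z : Set (L₁ × L₂)} {x : L₁} {y : L₂} (h : CSim Z x y) :
    CSim (Prod.swap ⁻¹' Z) y x := fun p hp => ⟨(h p.swap hp).1.symm, (h p.swap hp).2.symm⟩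

lemma CCell.swap {Z : Set (L₁ × L₂)} {f₁ : L₁[X]} {f₂ : L₂[X]} {x : L₁} {y : L₂}
    (h : CCell Z f₁ f₂ x y) : CCell (Prod.swap ⁻¹' Z) f₂ f₁ y x where
  fin := h.fin.preimage (Prod.swap_injective.injOn)
  ord := fun p hp q hq => (h.ord p.swap hp q.swap hq).symm
  sim := h.sim.swap
  out := fun p hp he => by
    have := h.sim p.swap hp
    have h3 := h.out p.swap hp
    subst he
    simp at this
    exact h3 (le_antisymm this.1 this.2)
  d₁ := fun y' hy' => h.d₂ y' (hy'.swap)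
  d₂ := fun y' hy' => h.d₁ y' (hy'.swap)
  pos := fun p hp => (h.pos p.swap hp).symm
  neg := fun p hp => (h.neg p.swap hp).symm
  root := fun y₀ x₀ hy hx hy0 hx0 => by
    have := h.root x₀ y₀ hx.swap hy.swap hx0 hy0
    exact ⟨this.1.symm, this.2.symm⟩

def CNeg (Z : Set (L₁ × L₂)) : Set (L₁ × L₂) := {p | (-p.1, -p.2) ∈ Z}

lemma CSim.refl' {Z : Set (L₁ × L₂)} {x : L₁} {y : L₂} (h : CSim Z x y) :
    CSim (CNeg Z) (-x) (-y) := by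
  intro p hp
  have := h _ hp
  simp only at this
  exact ⟨by rw [neg_lt, neg_lt (a := y)]; exact this.2, by rw [lt_neg, lt_neg (b := y)]; exact this.1⟩

lemma CNeg_neg (Z : Set (L₁ × L₂)) : CNeg (CNeg Z) = Z := by
  ext p; simp [CNeg]

lemma CSim.refl'' {Z : Set (L₁ × L₂)} {x : L₁} {y : L₂} (h : CSim (CNeg Z) x y) :
    CSim Z (-x) (-y) := by
  have := h.refl'
  rwa [CNeg_neg] at this

lemma CCell.refl' {Z : Set (L₁ × L₂)} {f₁ : L₁[X]} {f₂ : L₂[X]} {x : L₁} {y : L₂}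
    (h : CCell Z f₁ f₂ x y) :
    CCell (CNeg Z) (-(f₁.comp (-Polynomial.X))) (-(f₂.comp (-Polynomial.X))) (-x) (-y) where
  fin := h.fin.preimage (f := fun p : L₁ × L₂ => (-p.1, -p.2)) (by
    intro a _ b _ hab; simpa [Prod.ext_iff] using hab)
  ord := fun p hp q hq => by
    have := h.ord _ hq _ hp
    simpa using this
  sim := h.sim.refl'
  out := fun p hp he => h.out _ hp (by simp [he])
  d₁ := fun y' hy' => by
    have := h.d₁ (-y') (by simpa using hy'.refl'')
    simpa [Polynomial.derivative_comp] using this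
  d₂ := fun y' hy' => by
    have := h.d₂ (-y') (by simpa using hy'.refl'')
    simpa [Polynomial.derivative_comp] using this
  pos := fun p hp => by simpa using h.neg _ hp
  neg := fun p hp => by simpa using h.pos _ hp
  root := fun x₀ y₀ hx hy hx0 hy0 => by
    have := h.root (-x₀) (-y₀) (by simpa using hx.refl'') (by simpa using hy.refl'')
      (by simpa using hx0) (by simpa using hy0)
    refine ⟨?_, ?_⟩
    · rw [lt_neg, lt_neg (a := y₀)]; exact this.2
    · rw [neg_lt, neg_lt (a := y)]; exact this.1

lemma CSim.conv {Z : Set (L₁ × L₂)} {x : L₁} {y y' t : L₂} (h : CSim Z x y) (h' : CSim Z x y')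
    (h1 : y ≤ t) (h2 : t ≤ y') : CSim Z x t := by
  intro p hp
  have a := h p hp
  have b := h' p hp
  refine ⟨⟨fun hh => lt_of_le_of_lt h2 (b.1.1 hh), fun hh => a.1.2 (lt_of_le_of_lt h1 hh)⟩,
    ⟨fun hh => lt_of_lt_of_le (a.2.1 hh) h1, fun hh => b.2.2 (lt_of_lt_of_le hh h2)⟩⟩

lemma CCell.mono₂ (hL : PIVT L₂) {Z : Set (L₁ × L₂)} {f₁ : L₁[X]} {f₂ : L₂[X]} {x : L₁} {y : L₂}
    (h : CCell Z f₁ f₂ x y) {y' y'' : L₂} (h' : CSim Z x y') (h'' : CSim Z x y'')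
    (hlt : y' < y'') : f₂.eval y' < f₂.eval y'' :=
  hL.mono f₂ hlt fun t h1 h2 => h.d₂ t (h'.conv h'' h1.le h2.le)

/-- Everything right of a point in the cell, up to the next marked point. -/
lemma CCell.right (hL₁ : PIVT L₁) (hL₂ : PIVT L₂) {Z : Set (L₁ × L₂)} {f₁ : L₁[X]} {f₂ : L₂[X]}
    {x : L₁} {y : L₂} (h : CCell Z f₁ f₂ x y) (hx : ∃ x', CSim Z x' y ∧ 0 < f₁.eval x') :
    ∃ y', CSim Z x y' ∧ 0 < f₂.eval y' := by
  obtain ⟨x', hx', hpos⟩ := hx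
  by_cases hU : ({p | p ∈ Z ∧ x < p.1} : Set (L₁ × L₂)).Nonempty
  · have hUf : ({p | p ∈ Z ∧ x < p.1} : Set (L₁ × L₂)).Finite := h.fin.subset fun p hp => hp.1
    obtain ⟨p, ⟨hp, hxp⟩, hmin⟩ := Set.exists_min_image _ (fun p : L₁ × L₂ => p.1) hUf hU
    have key₂ : ∀ t, y ≤ t → t < p.2 → CSim Z x t := by
      intro t h1 h2 q hq
      have a := h.sim q hq
      refine ⟨⟨fun hh => ?_, fun hh => a.1.2 (h1.trans_lt hh)⟩,
        ⟨fun hh => (a.2.1 hh).trans_le h1, fun hh => ?_⟩⟩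
      · have := hmin q ⟨hq, hh⟩
        exact h2.trans_le (not_lt.1 fun hc => absurd ((h.ord q hq p hp).2 hc) (not_lt.2 this))
      · by_contra hc
        have hne := h.out q hq
        have hxq : x < q.1 := lt_of_le_of_ne (not_lt.1 hc) hne.symm
        have := hmin q ⟨hq, hxq⟩
        have h3 := (h.ord q hq p hp).2 (hh.trans h2)
        exact absurd h3 (not_lt.2 this)
    have key₁ : ∀ t, x' ≤ t → t < p.1 → CSim Z t y := by
      intro t h1 h2 q hq
      have a := h.sim q hq
      have b := hx' q hq
      refine ⟨⟨fun hh => b.1.1 (h1.trans_lt hh), fun hh => ?_⟩,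
        ⟨fun hh => ?_, fun hh => (b.2.2 hh).trans_le h1⟩⟩
      · exact h2.trans_le (hmin q ⟨hq, a.1.2 hh⟩)
      · by_contra hc
        have hne := h.out q hq
        have hxq : x < q.1 := lt_of_le_of_ne (not_lt.1 fun hc' => hc (a.2.1 hc')) hne.symm
        exact absurd (hmin q ⟨hq, hxq⟩) (not_le.2 (hh.trans h2))
    have hx'p : x' < p.1 := (hx' p hp).1.2 ((h.sim p hp).1.1 hxp)
    have hyp : y < p.2 := (h.sim p hp).1.1 hxp
    have hp1 : 0 < f₁.eval p.1 := hpos.trans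
      (hL₁.mono f₁ hx'p fun t h1 h2 => h.d₁ t (key₁ t h1.le h2))
    have hp2 : 0 < f₂.eval p.2 := (h.pos p hp).1 hp1
    rcases lt_trichotomy (f₂.eval y) 0 with hy | hy | hy
    · obtain ⟨c, h1, h2, h3⟩ := hL₂ f₂ y p.2 hyp hy hp2
      obtain ⟨d, h4, h5⟩ := exists_between h2
      refine ⟨d, key₂ d (h1.trans h4).le h5, ?_⟩
      rw [← h3]
      exact h.mono₂ hL₂ (key₂ c h1.le h2) (key₂ d (h1.trans h4).le h5) h4
    · obtain ⟨d, h4, h5⟩ := exists_between hyp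
      refine ⟨d, key₂ d h4.le h5, ?_⟩
      rw [← hy]
      exact h.mono₂ hL₂ (key₂ y le_rfl hyp) (key₂ d h4.le h5) h4
    · exact ⟨y, h.sim, hy⟩
  · have key₂ : ∀ t, y ≤ t → CSim Z x t := by
      intro t h1 q hq
      have a := h.sim q hq
      have hq1 : ¬ x < q.1 := fun hc => hU ⟨q, hq, hc⟩
      have hq2 : q.1 < x := lt_of_le_of_ne (not_lt.1 hq1) (h.out q hq)
      have hq3 : q.2 < t := (a.2.1 hq2).trans_le h1
      exact ⟨⟨fun hh => absurd hh hq1, fun hh => absurd hh (not_lt.2 hq3.le)⟩,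
        ⟨fun _ => hq3, fun _ => hq2⟩⟩
    obtain ⟨t, ht, htp⟩ := poly_pos_right f₂ y fun t ht => h.d₂ t (key₂ t ht.le)
    exact ⟨t, key₂ t ht.le, htp⟩

lemma CCell.left (hL₁ : PIVT L₁) (hL₂ : PIVT L₂) {Z : Set (L₁ × L₂)} {f₁ : L₁[X]} {f₂ : L₂[X]}
    {x : L₁} {y : L₂} (h : CCell Z f₁ f₂ x y) (hx : ∃ x', CSim Z x' y ∧ f₁.eval x' < 0) :
    ∃ y', CSim Z x y' ∧ f₂.eval y' < 0 := by
  obtain ⟨x', hx', hn⟩ := hx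
  obtain ⟨y', h1, h2⟩ := h.refl'.right hL₁ hL₂ ⟨-x', hx'.refl', by simpa using hn⟩
  exact ⟨-y', by simpa using h1.refl'', by simpa using h2⟩

lemma CSim.exists_lt {Z : Set (L₁ × L₂)}
    {x : L₁} {y : L₂} (hfin : Z.Finite) (hsim : CSim Z x y) (hout : ∀ p ∈ Z, p.1 ≠ x) :
    ∃ y', y' < y ∧ CSim Z x y' := by
  have key : ∃ m, m < y ∧ ∀ p ∈ Z, p.1 < x → p.2 ≤ m := by
    by_cases hU : ({p | p ∈ Z ∧ p.1 < x} : Set (L₁ × L₂)).Nonempty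
    · have hUf : ({p | p ∈ Z ∧ p.1 < x} : Set (L₁ × L₂)).Finite := hfin.subset fun p hp => hp.1
      obtain ⟨p, ⟨hp, hxp⟩, hmin⟩ := Set.exists_max_image _ (fun p : L₁ × L₂ => p.2) hUf hU
      exact ⟨p.2, (hsim p hp).2.1 hxp, fun q hq hqx => hmin q ⟨hq, hqx⟩⟩
    · exact ⟨y - 1, by linarith, fun p hp hpx => absurd ⟨p, hp, hpx⟩ hU⟩
  obtain ⟨m, hm, hmm⟩ := key
  obtain ⟨t, h1, h2⟩ := exists_between hm
  refine ⟨t, h2, fun p hp => ?_⟩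
  have a := hsim p hp
  rcases lt_or_gt_of_ne (hout p hp) with hlt | hlt
  · have := (hmm p hp hlt).trans_lt h1
    exact ⟨⟨fun hh => absurd hh (not_lt.2 hlt.le), fun hh => absurd hh (not_lt.2 this.le)⟩,
      ⟨fun _ => this, fun _ => hlt⟩⟩
  · have := h2.trans (a.1.1 hlt)
    exact ⟨⟨fun _ => this, fun _ => hlt⟩,
      ⟨fun hh => absurd hh (not_lt.2 hlt.le), fun hh => absurd hh (not_lt.2 this.le)⟩⟩

lemma CCell.main_pos (hL₁ : PIVT L₁) (hL₂ : PIVT L₂) {Z : Set (L₁ × L₂)} {f₁ : L₁[X]} {f₂ : L₂[X]}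
    {x : L₁} {y : L₂} (h : CCell Z f₁ f₂ x y) (hx : 0 < f₁.eval x) : 0 < f₂.eval y := by
  by_contra hy
  rw [not_lt] at hy
  obtain ⟨y₁, hy₁, hp₁⟩ := h.right hL₁ hL₂ ⟨x, h.sim, hx⟩
  have hlt : y < y₁ := by
    rcases lt_trichotomy y y₁ with h1 | h1 | h1
    · exact h1
    · subst h1; linarith
    · have := h.mono₂ hL₂ hy₁ h.sim h1; linarith
  obtain ⟨y₀, hy0, hy1, hr⟩ : ∃ y₀, y ≤ y₀ ∧ y₀ ≤ y₁ ∧ f₂.eval y₀ = 0 := by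
    rcases hy.lt_or_eq with h1 | h1
    · obtain ⟨c, a, b, d⟩ := hL₂ f₂ y y₁ hlt h1 hp₁
      exact ⟨c, a.le, b.le, d⟩
    · exact ⟨y, le_rfl, hlt.le, h1⟩
  obtain ⟨y₂, hy₂, hs₂⟩ := h.sim.exists_lt h.fin h.out
  have hn := (h.mono₂ hL₂ hs₂ h.sim hy₂).trans_le hy
  obtain ⟨x₂, hx₂, hxn⟩ := h.swap.left hL₂ hL₁ ⟨y₂, hs₂.swap, hn⟩
  have hx₂' : CSim Z x₂ y := hx₂.swap
  have hlt' : x₂ < x := by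
    rcases lt_trichotomy x₂ x with h1 | h1 | h1
    · exact h1
    · subst h1; linarith
    · have := h.swap.mono₂ hL₁ h.sim.swap hx₂ h1; linarith
  obtain ⟨x₀, a, b, c⟩ := hL₁ f₁ x₂ x hlt' hxn hx
  have := h.root x₀ y₀ (CSim.conv hx₂ h.sim.swap a.le b.le).swap (h.sim.conv hy₁ hy0 hy1) c hr
  exact absurd (this.1.1 b) (not_lt.2 hy0)

lemma CCell.main (hL₁ : PIVT L₁) (hL₂ : PIVT L₂) {Z : Set (L₁ × L₂)} {f₁ : L₁[X]} {f₂ : L₂[X]}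
    {x : L₁} {y : L₂} (h : CCell Z f₁ f₂ x y) :
    SignType.sign (f₁.eval x) = SignType.sign (f₂.eval y) := by
  have h1 := h.main_pos hL₁ hL₂
  have h2 := h.swap.main_pos hL₂ hL₁
  have h3 := h.refl'.main_pos hL₁ hL₂
  have h4 := h.refl'.swap.main_pos hL₂ hL₁
  simp at h3 h4
  rcases lt_trichotomy (f₁.eval x) 0 with a | a | a <;>
  rcases lt_trichotomy (f₂.eval y) 0 with b | b | b
  all_goals first
    | (have := h1 a; exfalso; linarith) | (have := h2 b; exfalso; linarith)
    | (have := h3 a; exfalso; linarith) | (have := h4 b; exfalso; linarith)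
    | simp [a, b]
end cells


section step
variable {L₁ L₂ : Type} [Field L₁] [LinearOrder L₁] [IsStrictOrderedRing L₁]
  [Field L₂] [LinearOrder L₂] [IsStrictOrderedRing L₂]

def CSame (Z : Set (L₁ × L₂)) (f₁ : L₁[X]) (f₂ : L₂[X]) : Prop :=
  ∀ x y, CSim Z x y → SignType.sign (f₁.eval x) = SignType.sign (f₂.eval y)

lemma CSame.swap {Z : Set (L₁ × L₂)} {f₁ : L₁[X]} {f₂ : L₂[X]} (h : CSame Z f₁ f₂) :
    CSame (Prod.swap ⁻¹' Z) f₂ f₁ := fun x y hxy => (h y x hxy.swap).symm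

lemma CSim.out_swap {Z : Set (L₁ × L₂)} {x : L₁} {y : L₂} (h : CSim Z x y)
    (hout : ∀ p ∈ Z, p.1 ≠ x) : ∀ p ∈ Z, p.2 ≠ y := by
  intro p hp he
  have := h p hp
  subst he
  simp at this
  exact hout p hp (le_antisymm this.1 this.2)

lemma CSame.nz₂ {Z : Set (L₁ × L₂)} (hfin : Z.Finite) {d₁ : L₁[X]} {d₂ : L₂[X]}
    (h : CSame Z d₁ d₂) (hd : d₂ ≠ 0) {x : L₁} {y : L₂} (hxy : CSim Z x y)
    (hout : ∀ p ∈ Z, p.1 ≠ x) : d₂.eval y ≠ 0 := by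
  intro h0
  have hx0 : SignType.sign (d₁.eval x) = 0 := by rw [h x y hxy, h0]; simp
  obtain ⟨y', hlt, hy'⟩ := hxy.exists_lt hfin hout
  apply hd
  apply Polynomial.eq_zero_of_infinite_isRoot
  refine (Set.Icc_infinite hlt).mono fun t ht => ?_
  have := h x t (hy'.conv hxy ht.1 ht.2)
  rw [hx0] at this
  exact sign_eq_zero_iff.1 this.symm

lemma CSame.nz₁ {Z : Set (L₁ × L₂)} (hfin : Z.Finite) {d₁ : L₁[X]} {d₂ : L₂[X]}
    (h : CSame Z d₁ d₂) (hd : d₁ ≠ 0) {x : L₁} {y : L₂} (hxy : CSim Z x y)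
    (hout : ∀ p ∈ Z, p.1 ≠ x) : d₁.eval x ≠ 0 :=
  h.swap.nz₂ (hfin.preimage (Prod.swap_injective.injOn)) hd hxy.swap
    (fun p hp => hxy.out_swap hout p.swap hp)

lemma CSim.trans' {Z : Set (L₁ × L₂)} {x x' : L₁} {y y' : L₂} (h : CSim Z x y)
    (h1 : CSim Z x' y) (h2 : CSim Z x y') : CSim Z x' y' := fun p hp =>
  ⟨(h1 p hp).1.trans ((h p hp).1.symm.trans (h2 p hp).1),
   (h1 p hp).2.trans ((h p hp).2.symm.trans (h2 p hp).2)⟩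

lemma cord_aux (hL₁ : PIVT L₁) {Z : Set (L₁ × L₂)} (hfin : Z.Finite) {f₁ : L₁[X]} {d₂ : L₂[X]}
    (h : CSame Z f₁.derivative d₂) (hd : f₁.derivative ≠ 0) {p q : L₁ × L₂}
    (hp : CSim Z p.1 p.2) (hq : CSim Z q.1 q.2) (hp0 : f₁.eval p.1 = 0) (hq0 : f₁.eval q.1 = 0)
    (hlt : p.1 < q.1) : p.2 < q.2 := by
  by_contra hc
  rw [not_lt] at hc
  by_cases hs : CSim Z p.1 q.2
  · obtain ⟨c, h1, h2, h3⟩ := hL₁.rolle f₁ hlt hp0 hq0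
    have hcs : CSim Z c q.2 := (CSim.conv hs.swap hq.swap h1.le h2.le).swap
    refine h.nz₁ hfin hd hcs ?_ h3
    intro z hz hzc
    subst hzc
    exact absurd ((hq z hz).2.1 h2) (not_lt.2 ((hs z hz).1.1 h1).le)
  · apply hs
    intro z hz
    have a := hp z hz
    have b := hq z hz
    refine ⟨⟨fun hh => hc.trans_lt (a.1.1 hh), fun hh => hlt.trans (b.1.2 hh)⟩,
      ⟨fun hh => b.2.1 (hh.trans hlt), fun hh => a.2.2 (hh.trans_le hc)⟩⟩

lemma CCell.mk' {Z : Set (L₁ × L₂)} (hfin : Z.Finite) (hord : COrd Z) {f₁ : L₁[X]} {f₂ : L₂[X]}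
    (h : CSame Z f₁.derivative f₂.derivative) {x : L₁} {y : L₂} (hxy : CSim Z x y)
    (hout : ∀ p ∈ Z, p.1 ≠ x)
    (hZ : ∀ p ∈ Z, SignType.sign (f₁.eval p.1) = SignType.sign (f₂.eval p.2))
    (root : ∀ x₀ y₀, CSim Z x₀ y → CSim Z x y₀ → f₁.eval x₀ = 0 → f₂.eval y₀ = 0 →
      (x₀ < x ↔ y₀ < y) ∧ (x < x₀ ↔ y < y₀))
    (hpos : 0 < f₁.derivative.eval x) : CCell Z f₁ f₂ x y where
  fin := hfin
  ord := hord
  sim := hxy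
  out := hout
  d₁ := fun x' hx' => by
    rw [← sign_eq_one_iff] at hpos ⊢
    rw [h x' y hx', ← h x y hxy, hpos]
  d₂ := fun y' hy' => by
    rw [← sign_eq_one_iff] at hpos ⊢
    rw [← h x y' hy', hpos]
  pos := fun p hp => by rw [← sign_eq_one_iff, hZ p hp, sign_eq_one_iff]
  neg := fun p hp => by rw [← sign_eq_neg_one_iff, hZ p hp, sign_eq_neg_one_iff]
  root := root

lemma cstep (hL₁ : PIVT L₁) (hL₂ : PIVT L₂) {Z : Set (L₁ × L₂)} (hfin : Z.Finite) (hord : COrd Z)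
    {f₁ : L₁[X]} {f₂ : L₂[X]} (h : CSame Z f₁.derivative f₂.derivative)
    (hd₁ : f₁.derivative ≠ 0) (hd₂ : f₂.derivative ≠ 0)
    (hZ : ∀ p ∈ Z, SignType.sign (f₁.eval p.1) = SignType.sign (f₂.eval p.2)) :
    ∃ Z' : Set (L₁ × L₂), Z ⊆ Z' ∧ Z'.Finite ∧ COrd Z' ∧ CSame Z' f₁ f₂ ∧
      ∀ p ∈ Z', p ∉ Z → f₁.eval p.1 = 0 := by
  have hf₁ : f₁ ≠ 0 := by rintro rfl; simp at hd₁
  have hf₂ : f₂ ≠ 0 := by rintro rfl; simp at hd₂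
  set N : Set (L₁ × L₂) := {p | f₁.eval p.1 = 0 ∧ f₂.eval p.2 = 0 ∧ CSim Z p.1 p.2} with hN
  have hswf : (Prod.swap ⁻¹' Z).Finite := hfin.preimage (Prod.swap_injective.injOn)
  refine ⟨Z ∪ N, Set.subset_union_left, ?_, ?_, ?_, ?_⟩
  · refine hfin.union ?_
    refine ((Polynomial.finite_setOfPred_isRoot hf₁).prod (Polynomial.finite_setOfPred_isRoot hf₂)).subset ?_
    intro p hp
    exact ⟨hp.1, hp.2.1⟩
  · rintro p (hp | hp) q (hq | hq)
    · exact hord p hp q hq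
    · exact (hq.2.2 p hp).2
    · exact (hp.2.2 q hq).1
    · exact ⟨fun hlt => cord_aux hL₁ hfin h hd₁ hp.2.2 hq.2.2 hp.1 hq.1 hlt,
        fun hlt => cord_aux (p := p.swap) (q := q.swap) hL₂ hswf h.swap hd₂ hp.2.2.swap hq.2.2.swap
          hp.2.1 hq.2.1 hlt⟩
  · intro x y hxy'
    have hxy : CSim Z x y := fun p hp => hxy' p (Or.inl hp)
    by_cases hout : ∀ p ∈ Z, p.1 ≠ x
    · have root : ∀ x₀ y₀, CSim Z x₀ y → CSim Z x y₀ → f₁.eval x₀ = 0 → f₂.eval y₀ = 0 →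
          (x₀ < x ↔ y₀ < y) ∧ (x < x₀ ↔ y < y₀) := by
        intro x₀ y₀ h1 h2 h3 h4
        have := hxy' (x₀, y₀) (Or.inr ⟨h3, h4, hxy.trans' h1 h2⟩)
        exact ⟨this.2, this.1⟩
      rcases lt_or_gt_of_ne (h.nz₁ hfin hd₁ hxy hout) with hlt | hlt
      · have := (CCell.mk' (f₁ := -f₁) (f₂ := -f₂) hfin hord (by
            intro x y hxy
            have := h x y hxy
            simp [Left.sign_neg, this]) hxy hout (by
            intro p hp
            simp [Left.sign_neg, hZ p hp]) (by simpa using root) (by simpa using hlt)).main hL₁ hL₂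
        simpa [Left.sign_neg] using this
      · exact (CCell.mk' hfin hord h hxy hout hZ root hlt).main hL₁ hL₂
    · push Not at hout
      obtain ⟨p, hp, rfl⟩ := hout
      have a := hxy p hp
      simp at a
      rw [le_antisymm a.2 a.1]
      exact hZ p hp
  · rintro p (hp | hp) hn
    · exact absurd hp hn
    · exact hp.1

structure CClosed {A : Type} [CommRing A] (C : Finset A[X]) : Prop where
  der : ∀ f ∈ C, f.natDegree ≠ 0 → f.derivative ∈ C
  erase : ∀ f ∈ C, f.natDegree ≠ 0 → f.eraseLead ∈ C
  rem : ∀ f ∈ C, ∀ g ∈ C, g.natDegree ≠ 0 → g.natDegree ≤ f.natDegree →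
    ∃ k : ℕ, ∃ q r : A[X], r ∈ C ∧ r.natDegree < g.natDegree ∧
      Polynomial.C (g.leadingCoeff ^ k) * f = q * g + r

lemma closed_thm {A : Type} [CommRing A] (hL₁ : PIVT L₁) (hL₂ : PIVT L₂) (C : Finset A[X])
    (hC : CClosed C) (α : A →+* L₁) (β : A →+* L₂)
    (hs : ∀ f ∈ C, SignType.sign (α f.leadingCoeff) = SignType.sign (β f.leadingCoeff)) :
    ∃ Z : Set (L₁ × L₂), Z.Finite ∧ COrd Z ∧ ∀ f ∈ C, CSame Z (f.map α) (f.map β) := by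
  classical
  have key : ∀ s : Finset A[X], s ⊆ C →
      (∀ g ∈ s, ∀ f ∈ C, f.natDegree < g.natDegree → f ∈ s) →
      ∃ Z : Set (L₁ × L₂), Z.Finite ∧ COrd Z ∧ (∀ f ∈ s, CSame Z (f.map α) (f.map β)) ∧
        ∀ p ∈ Z, ∃ g ∈ s, α g.leadingCoeff ≠ 0 ∧ g.natDegree ≠ 0 ∧ (g.map α).eval p.1 = 0 := by
    intro s
    induction s using Finset.induction_on_max_value (fun f : A[X] => f.natDegree) with
    | empty => intro _ _; exact ⟨∅, by simp, by simp [COrd], by simp, by simp⟩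
    | insert a s has hmax ih =>
      intro hsub hdown
      obtain ⟨Z, hfin, hord, hsame, hroot⟩ := ih ((Finset.subset_insert _ _).trans hsub) (by
        intro g hg f hf hlt
        have := hdown g (Finset.mem_insert_of_mem hg) f hf hlt
        rcases Finset.mem_insert.1 this with rfl | h
        · exact absurd (hmax g hg) (not_le.2 hlt)
        · exact h)
      have haC : a ∈ C := hsub (Finset.mem_insert_self _ _)
      have hlow : ∀ f ∈ C, f.natDegree < a.natDegree → f ∈ s := by
        intro f hf hlt
        rcases Finset.mem_insert.1 (hdown a (Finset.mem_insert_self _ _) f hf hlt) with rfl | h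
        · exact absurd hlt (lt_irrefl _)
        · exact h
      have hsa := hs a haC
      have easy : CSame Z (a.map α) (a.map β) → ∃ Z : Set (L₁ × L₂), Z.Finite ∧ COrd Z ∧
          (∀ f ∈ insert a s, CSame Z (f.map α) (f.map β)) ∧ ∀ p ∈ Z, ∃ g ∈ insert a s,
          α g.leadingCoeff ≠ 0 ∧ g.natDegree ≠ 0 ∧ (g.map α).eval p.1 = 0 := by
        intro h
        refine ⟨Z, hfin, hord, ?_, ?_⟩
        · intro f hf
          rcases Finset.mem_insert.1 hf with rfl | hf
          · exact h
          · exact hsame f hf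
        · intro p hp
          obtain ⟨g, hg, h'⟩ := hroot p hp
          exact ⟨g, Finset.mem_insert_of_mem hg, h'⟩
      by_cases hdeg : a.natDegree = 0
      · apply easy
        intro x y _
        rw [Polynomial.leadingCoeff, hdeg] at hsa
        rw [Polynomial.eq_C_of_natDegree_eq_zero hdeg]
        simpa using hsa
      by_cases hlc : α a.leadingCoeff = 0
      · apply easy
        have hlc' : β a.leadingCoeff = 0 := by
          rw [hlc, sign_zero] at hsa
          exact sign_eq_zero_iff.1 hsa.symm
        have he := hsame a.eraseLead (hlow _ (hC.erase a haC hdeg)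
          (lt_of_le_of_lt (Polynomial.eraseLead_natDegree_le a) (by omega)))
        have e1 : a.eraseLead.map α = a.map α := by
          conv_rhs => rw [← Polynomial.eraseLead_add_monomial_natDegree_leadingCoeff a]
          rw [Polynomial.map_add, Polynomial.map_monomial, hlc, Polynomial.monomial_zero_right, add_zero]
        have e2 : a.eraseLead.map β = a.map β := by
          conv_rhs => rw [← Polynomial.eraseLead_add_monomial_natDegree_leadingCoeff a]
          rw [Polynomial.map_add, Polynomial.map_monomial, hlc', Polynomial.monomial_zero_right, add_zero]
        rwa [e1, e2] at he
      have hlc' : β a.leadingCoeff ≠ 0 := by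
        intro h0
        rw [h0, sign_zero] at hsa
        exact hlc (sign_eq_zero_iff.1 hsa)
      have hd := hsame a.derivative (hlow _ (hC.der a haC hdeg)
        (Polynomial.natDegree_derivative_lt hdeg))
      rw [← Polynomial.derivative_map, ← Polynomial.derivative_map] at hd
      have n1 : (a.map α).natDegree = a.natDegree := Polynomial.natDegree_map_of_leadingCoeff_ne_zero _ hlc
      have n2 : (a.map β).natDegree = a.natDegree := Polynomial.natDegree_map_of_leadingCoeff_ne_zero _ hlc'
      have hd1 : (a.map α).derivative ≠ 0 := by
        intro h0
        exact hdeg (n1 ▸ Polynomial.derivative_eq_zero.1 h0)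
      have hd2 : (a.map β).derivative ≠ 0 := by
        intro h0
        exact hdeg (n2 ▸ Polynomial.derivative_eq_zero.1 h0)
      have hself : ∀ p ∈ Z, CSim Z p.1 p.2 := by
        intro p hp q hq
        exact ⟨hord p hp q hq, hord q hq p hp⟩
      have hZ : ∀ p ∈ Z, SignType.sign ((a.map α).eval p.1) = SignType.sign ((a.map β).eval p.2) := by
        intro p hp
        obtain ⟨g, hg, hgl, hgd, hg0⟩ := hroot p hp
        have hgC : g ∈ C := hsub (Finset.mem_insert_of_mem hg)
        obtain ⟨k, q, r, hr, hrd, he⟩ := hC.rem a haC g hgC hgd (hmax g hg)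
        have hrs := hsame r (hlow r hr (hrd.trans_le (hmax g hg))) _ _ (hself p hp)
        have hg0' : (g.map β).eval p.2 = 0 := by
          have := hsame g hg _ _ (hself p hp)
          rw [hg0, sign_zero] at this
          exact sign_eq_zero_iff.1 this.symm
        have e1 := congrArg (fun f => (Polynomial.map α f).eval p.1) he
        have e2 := congrArg (fun f => (Polynomial.map β f).eval p.2) he
        simp only [Polynomial.map_mul, Polynomial.map_add, Polynomial.map_C, Polynomial.eval_mul,
          Polynomial.eval_add, Polynomial.eval_C, hg0, hg0', mul_zero, zero_add, map_pow, Polynomial.map_pow, Polynomial.eval_pow] at e1 e2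
        rw [← e1, ← e2, sign_mul, sign_mul, sign_pow, sign_pow, ← hs g hgC] at hrs
        refine mul_left_cancel₀ (pow_ne_zero k ?_) hrs
        rwa [Ne, sign_eq_zero_iff]
      obtain ⟨Z', hsubZ, hfin', hord', hsame', hnew⟩ := cstep hL₁ hL₂ hfin hord hd hd1 hd2 hZ
      refine ⟨Z', hfin', hord', ?_, ?_⟩
      · intro f hf
        rcases Finset.mem_insert.1 hf with rfl | hf
        · exact hsame'
        · exact fun x y hxy => hsame f hf x y (fun p hp => hxy p (hsubZ hp))
      · intro p hp
        by_cases hpZ : p ∈ Z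
        · obtain ⟨g, hg, h'⟩ := hroot p hpZ
          exact ⟨g, Finset.mem_insert_of_mem hg, h'⟩
        · exact ⟨a, Finset.mem_insert_self _ _, hlc, hdeg, hnew p hp hpZ⟩
  obtain ⟨Z, h1, h2, h3, -⟩ := key C subset_rfl (fun _ _ f hf _ => hf)
  exact ⟨Z, h1, h2, h3⟩
end step


section transfer

lemma prem_exists {A : Type} [CommRing A] (g : A[X]) (hg : g.natDegree ≠ 0) :
    ∀ (m : ℕ) (f : A[X]), f.natDegree < m → ∃ k : ℕ, ∃ q r : A[X], r.natDegree < g.natDegree ∧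
      Polynomial.C (g.leadingCoeff ^ k) * f = q * g + r := by
  intro m
  induction m with
  | zero => intro f hf; omega
  | succ m ih =>
    intro f hf
    by_cases hlt : f.natDegree < g.natDegree
    · exact ⟨0, 0, f, hlt, by simp⟩
    push Not at hlt
    set f1 : A[X] := Polynomial.C g.leadingCoeff * f -
      Polynomial.C f.leadingCoeff * Polynomial.X ^ (f.natDegree - g.natDegree) * g with hf1
    have hd : f1.natDegree ≤ f.natDegree := by
      refine (Polynomial.natDegree_sub_le _ _).trans (max_le ?_ ?_)
      · exact Polynomial.natDegree_C_mul_le _ _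
      · rw [mul_assoc]
        refine (Polynomial.natDegree_C_mul_le _ _).trans ?_
        refine Polynomial.natDegree_mul_le.trans ?_
        have := Polynomial.natDegree_X_pow_le (R := A) (f.natDegree - g.natDegree)
        omega
    have hc : f1.coeff f.natDegree = 0 := by
      rw [hf1, Polynomial.coeff_sub, Polynomial.coeff_C_mul, mul_assoc, Polynomial.coeff_C_mul]
      have : (Polynomial.X ^ (f.natDegree - g.natDegree) * g).coeff f.natDegree = g.leadingCoeff := by
        conv_lhs => rw [show f.natDegree = g.natDegree + (f.natDegree - g.natDegree) by omega]
        rw [show (g.natDegree + (f.natDegree - g.natDegree) - g.natDegree) =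
          f.natDegree - g.natDegree by omega, Polynomial.coeff_X_pow_mul]
        rfl
      rw [this]
      simp only [Polynomial.leadingCoeff]
      ring
    have hlt1 : f1.natDegree < f.natDegree := by
      refine lt_of_le_of_ne hd (fun h => ?_)
      rw [← h] at hc
      have : f1 = 0 := Polynomial.leadingCoeff_eq_zero.1 hc
      rw [this, Polynomial.natDegree_zero] at h
      omega
    obtain ⟨k, q, r, hr, he⟩ := ih f1 (by omega)
    refine ⟨k + 1, q + Polynomial.C (g.leadingCoeff ^ k) * (Polynomial.C f.leadingCoeff *
      Polynomial.X ^ (f.natDegree - g.natDegree)), r, hr, ?_⟩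
    have : Polynomial.C (g.leadingCoeff ^ (k + 1)) * f = Polynomial.C (g.leadingCoeff ^ k) * f1 +
        Polynomial.C (g.leadingCoeff ^ k) * (Polynomial.C f.leadingCoeff *
        Polynomial.X ^ (f.natDegree - g.natDegree)) * g := by
      rw [hf1, pow_succ, Polynomial.C_mul]; ring
    rw [this, he]; ring

lemma prem_fun (A : Type) [CommRing A] : ∃ P : A[X] → A[X] → A[X],
    ∀ f g : A[X], (g.natDegree ≠ 0 → (P f g).natDegree < g.natDegree ∧ ∃ k : ℕ, ∃ q : A[X],
      Polynomial.C (g.leadingCoeff ^ k) * f = q * g + P f g) := by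
  have : ∀ f g : A[X], ∃ r : A[X], (g.natDegree ≠ 0 → r.natDegree < g.natDegree ∧
      ∃ k : ℕ, ∃ q : A[X], Polynomial.C (g.leadingCoeff ^ k) * f = q * g + r) := by
    intro f g
    by_cases h : g.natDegree = 0
    · exact ⟨0, fun h' => absurd h h'⟩
    · obtain ⟨k, q, r, hr, he⟩ := prem_exists g h (f.natDegree + 1) f (by omega)
      exact ⟨r, fun _ => ⟨hr, k, q, he⟩⟩
  choose P hP using this
  exact ⟨P, hP⟩

lemma closure_exists {A : Type} [CommRing A] (F : Finset A[X]) :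
    ∃ C : Finset A[X], F ⊆ C ∧ CClosed C := by
  classical
  obtain ⟨P, hP⟩ := prem_fun A
  have key : ∀ (d : ℕ) (C : Finset A[X]),
      (∀ f ∈ C, f.natDegree ≠ 0 → f.derivative ∈ C ∨ f.derivative.natDegree < d) →
      (∀ f ∈ C, f.natDegree ≠ 0 → f.eraseLead ∈ C ∨ f.eraseLead.natDegree < d) →
      (∀ f ∈ C, ∀ g ∈ C, g.natDegree ≠ 0 → g.natDegree ≤ f.natDegree →
        P f g ∈ C ∨ (P f g).natDegree < d) → ∃ C' : Finset A[X], C ⊆ C' ∧ CClosed C' := by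
    intro d
    induction d with
    | zero =>
      intro C h1 h2 h3
      refine ⟨C, subset_rfl, ?_, ?_, ?_⟩
      · intro f hf h; simpa using h1 f hf h
      · intro f hf h; simpa using h2 f hf h
      · intro f hf g hg h h'
        obtain ⟨a, k, q, e⟩ := hP f g h
        exact ⟨k, q, P f g, by simpa using h3 f hf g hg h h', a, e⟩
    | succ d ih =>
      intro C h1 h2 h3
      let pr := (C ×ˢ C).filter (fun p => p.2.natDegree ≠ 0 ∧ p.2.natDegree ≤ p.1.natDegree)
      let un := C.filter (fun p => p.natDegree ≠ 0)
      let S : Finset A[X] := C ∪ (un.image (fun p => Polynomial.derivative p) ∪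
        (un.image Polynomial.eraseLead ∪ pr.image (fun p => P p.1 p.2)))
      have hCS : C ⊆ S := Finset.subset_union_left
      have m1 : ∀ f ∈ C, f.natDegree ≠ 0 → f.derivative ∈ S := by
        intro f hf h
        exact Finset.mem_union_right _ (Finset.mem_union_left _
          (Finset.mem_image_of_mem (fun p => Polynomial.derivative p) (Finset.mem_filter.2 ⟨hf, h⟩)))
      have m2 : ∀ f ∈ C, f.natDegree ≠ 0 → f.eraseLead ∈ S := by
        intro f hf h
        exact Finset.mem_union_right _ (Finset.mem_union_right _ (Finset.mem_union_left _
          (Finset.mem_image_of_mem _ (Finset.mem_filter.2 ⟨hf, h⟩))))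
      have m3 : ∀ f ∈ C, ∀ g ∈ C, g.natDegree ≠ 0 → g.natDegree ≤ f.natDegree → P f g ∈ S := by
        intro f hf g hg h h'
        exact Finset.mem_union_right _ (Finset.mem_union_right _ (Finset.mem_union_right _
          (Finset.mem_image_of_mem (fun p : A[X] × A[X] => P p.1 p.2) (a := (f, g))
            (Finset.mem_filter.2 ⟨Finset.mem_product.2 ⟨hf, hg⟩, h, h'⟩))))
      have hnew : ∀ f ∈ S, f ∈ C ∨ f.natDegree < d + 1 := by
        intro f hf
        rcases Finset.mem_union.1 hf with h | h
        · exact Or.inl h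
        rcases Finset.mem_union.1 h with h | h
        · obtain ⟨p, hp, rfl⟩ := Finset.mem_image.1 h
          exact h1 p (Finset.mem_filter.1 hp).1 (Finset.mem_filter.1 hp).2
        rcases Finset.mem_union.1 h with h | h
        · obtain ⟨p, hp, rfl⟩ := Finset.mem_image.1 h
          exact h2 p (Finset.mem_filter.1 hp).1 (Finset.mem_filter.1 hp).2
        · obtain ⟨p, hp, rfl⟩ := Finset.mem_image.1 h
          obtain ⟨a, b, c⟩ := Finset.mem_filter.1 hp
          exact h3 p.1 (Finset.mem_product.1 a).1 p.2 (Finset.mem_product.1 a).2 b c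
      obtain ⟨C', hsub, hcl⟩ := ih S (by
          intro f hf h
          rcases hnew f hf with h' | h'
          · exact Or.inl (m1 f h' h)
          · right
            have := Polynomial.natDegree_derivative_lt h
            omega) (by
          intro f hf h
          rcases hnew f hf with h' | h'
          · exact Or.inl (m2 f h' h)
          · right
            have := Polynomial.eraseLead_natDegree_le f
            omega) (by
          intro f hf g hg h hle
          have := (hP f g h).1
          rcases hnew f hf with h' | h'
          · rcases hnew g hg with h'' | h''
            · exact Or.inl (m3 f h' g h'' h hle)
            · right; omega
          · right; omega)
      exact ⟨C', hCS.trans hsub, hcl⟩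
  obtain ⟨D, hD⟩ : ∃ D : ℕ, ∀ f ∈ F, f.natDegree ≤ D :=
    ⟨F.sup Polynomial.natDegree, fun f hf => Finset.le_sup (f := Polynomial.natDegree) hf⟩
  refine key D F ?_ ?_ ?_
  · intro f hf h
    right
    have := Polynomial.natDegree_derivative_lt h
    have := hD f hf
    omega
  · intro f hf h
    right
    have := Polynomial.eraseLead_natDegree_le f
    have := hD f hf
    omega
  · intro f hf g hg h hle
    right
    have := (hP f g h).1
    have := hD g hg
    omega

lemma onestep {A : Type} [CommRing A] (F : Finset A[X]) : ∃ G : Finset A,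
    ∀ {L₁ L₂ : Type} [Field L₁] [LinearOrder L₁] [IsStrictOrderedRing L₁]
      [Field L₂] [LinearOrder L₂] [IsStrictOrderedRing L₂], PIVT L₁ → PIVT L₂ →
      ∀ (α : A →+* L₁) (β : A →+* L₂),
      (∀ g ∈ G, SignType.sign (α g) = SignType.sign (β g)) →
      ∀ x : L₁, ∃ y : L₂, ∀ f ∈ F, SignType.sign ((f.map α).eval x) =
        SignType.sign ((f.map β).eval y) := by
  classical
  obtain ⟨C, hFC, hC⟩ := closure_exists F
  refine ⟨C.image Polynomial.leadingCoeff, ?_⟩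
  intro L₁ L₂ _ _ _ _ _ _ hL₁ hL₂ α β hs x
  obtain ⟨Z, hfin, hord, hsame⟩ := closed_thm hL₁ hL₂ C hC α β
    (fun f hf => hs _ (Finset.mem_image_of_mem _ hf))
  have : ∃ y, CSim Z x y := by
    by_cases h : ∃ p ∈ Z, p.1 = x
    · obtain ⟨p, hp, rfl⟩ := h
      exact ⟨p.2, fun q hq => ⟨hord p hp q hq, hord q hq p hp⟩⟩
    · push Not at h
      let lo := (hfin.toFinset.filter (fun p => p.1 < x)).image Prod.snd
      let hi := (hfin.toFinset.filter (fun p => x < p.1)).image Prod.snd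
      obtain ⟨y, h1, h2⟩ := Order.exists_between_finsets (lo := lo) (hi := hi) (by
        intro a ha b hb
        obtain ⟨p, hp, rfl⟩ := Finset.mem_image.1 ha
        obtain ⟨q, hq, rfl⟩ := Finset.mem_image.1 hb
        rw [Finset.mem_filter, Set.Finite.mem_toFinset] at hp hq
        exact (hord p hp.1 q hq.1).1 (hp.2.trans hq.2))
      refine ⟨y, fun p hp => ?_⟩
      rcases lt_or_gt_of_ne (h p hp) with hlt | hlt
      · have := h1 p.2 (Finset.mem_image_of_mem _ (Finset.mem_filter.2 ⟨hfin.mem_toFinset.2 hp, hlt⟩))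
        exact ⟨⟨fun h => absurd h hlt.not_gt, fun h => absurd h this.not_gt⟩,
          fun _ => this, fun _ => hlt⟩
      · have := h2 p.2 (Finset.mem_image_of_mem _ (Finset.mem_filter.2 ⟨hfin.mem_toFinset.2 hp, hlt⟩))
        exact ⟨⟨fun _ => this, fun _ => hlt⟩,
          fun h => absurd h hlt.not_gt, fun h => absurd h this.not_gt⟩
  obtain ⟨y, hy⟩ := this
  exact ⟨y, fun f hf => hsame f (hFC hf) x y hy⟩

lemma PIVT.real : PIVT ℝ := by
  intro f a b hab h1 h2
  obtain ⟨c, hc, h⟩ := intermediate_value_Ioo hab.le (f := fun x => f.eval x)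
    f.continuous.continuousOn ⟨h1, h2⟩
  exact ⟨c, hc.1, hc.2, h⟩

lemma real_hom_sign {L : Type} [Field L] [LinearOrder L] [IsStrictOrderedRing L] (φ : ℝ →+* L)
    (c : ℝ) : SignType.sign (φ c) = SignType.sign c := by
  have pos : ∀ c : ℝ, 0 < c → 0 < φ c := by
    intro c hc
    have h1 : φ c = φ (Real.sqrt c) * φ (Real.sqrt c) := by
      rw [← map_mul, Real.mul_self_sqrt hc.le]
    have h2 : φ c ≠ 0 := by rw [Ne, map_eq_zero]; exact hc.ne'
    rw [h1] at h2 ⊢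
    exact lt_of_le_of_ne (mul_self_nonneg _) h2.symm
  rcases lt_trichotomy c 0 with h | h | h
  · rw [sign_neg h, sign_neg]
    have := pos (-c) (by linarith)
    rw [map_neg] at this
    linarith
  · simp [h]
  · rw [sign_pos h, sign_pos (pos c h)]

theorem transfer {L : Type} [Field L] [LinearOrder L] [IsStrictOrderedRing L] (hL : PIVT L) :
    ∀ (n : ℕ) (φ : MvPolynomial (Fin n) ℝ →+* L) (F : Finset (MvPolynomial (Fin n) ℝ)),
      ∃ v : Fin n → ℝ, ∀ f ∈ F, SignType.sign (φ f) = SignType.sign (MvPolynomial.eval v f) := by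
  classical
  intro n
  induction n with
  | zero =>
    intro φ F
    refine ⟨Fin.elim0, fun f _ => ?_⟩
    obtain ⟨c, rfl⟩ := MvPolynomial.C_surjective (R := ℝ) (Fin 0) f
    rw [MvPolynomial.eval_C]
    exact real_hom_sign (φ.comp MvPolynomial.C) c
  | succ n ih =>
    intro φ F
    obtain ⟨G, hG⟩ := onestep (F.image (MvPolynomial.finSuccEquiv ℝ n))
    let ψ : (MvPolynomial (Fin n) ℝ)[X] →+* L :=
      φ.comp ((MvPolynomial.finSuccEquiv ℝ n).symm : (MvPolynomial (Fin n) ℝ)[X] →+* _)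
    obtain ⟨v, hv⟩ := ih (ψ.comp Polynomial.C) G
    obtain ⟨y, hy⟩ := hG hL PIVT.real (ψ.comp Polynomial.C) (MvPolynomial.eval v) hv (ψ Polynomial.X)
    refine ⟨Fin.cons y v, fun f hf => ?_⟩
    have h := hy _ (Finset.mem_image_of_mem _ hf)
    rw [MvPolynomial.eval_eq_eval_mv_eval', ← h]
    congr 1
    have : ∀ q : (MvPolynomial (Fin n) ℝ)[X], (q.map (ψ.comp Polynomial.C)).eval (ψ Polynomial.X) = ψ q := by
      intro q
      rw [Polynomial.eval_map]
      induction q using Polynomial.induction_on' with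
      | add p q hp hq => rw [Polynomial.eval₂_add, hp, hq, map_add]
      | monomial k a =>
        rw [Polynomial.eval₂_monomial, ← Polynomial.C_mul_X_pow_eq_monomial, map_mul, map_pow]
        rfl
    rw [this]
    simp [ψ]

end transfer

section preo

structure IsPreo {A : Type} [CommRing A] (T : Set A) : Prop where
  add : ∀ a ∈ T, ∀ b ∈ T, a + b ∈ T
  mul : ∀ a ∈ T, ∀ b ∈ T, a * b ∈ T
  sq : ∀ a, a * a ∈ T
  neg : (-1 : A) ∉ T

lemma IsPreo.zero {A : Type} [CommRing A] {T : Set A} (h : IsPreo T) : (0 : A) ∈ T := by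
  simpa using h.sq 0
lemma IsPreo.one {A : Type} [CommRing A] {T : Set A} (h : IsPreo T) : (1 : A) ∈ T := by
  simpa using h.sq 1

lemma IsPreo.exists_max {A : Type} [CommRing A] {T : Set A} (hT : IsPreo T) :
    ∃ Q : Set A, T ⊆ Q ∧ IsPreo Q ∧ (∀ a, a ∈ Q ∨ -a ∈ Q) ∧
      (∀ a b, a * b ∈ Q → -(a * b) ∈ Q → (a ∈ Q ∧ -a ∈ Q) ∨ (b ∈ Q ∧ -b ∈ Q)) := by
  obtain ⟨Q, hTQ, hQ⟩ := zorn_subset_nonempty {Q : Set A | IsPreo Q} (by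
    intro c hc hchain hne
    refine ⟨⋃₀ c, ?_, fun s hs => Set.subset_sUnion_of_mem hs⟩
    refine ⟨?_, ?_, ?_, ?_⟩
    · rintro a ⟨s, hs, ha⟩ b ⟨t, ht, hb⟩
      rcases hchain.total hs ht with h | h
      · exact ⟨t, ht, (hc ht).add a (h ha) b hb⟩
      · exact ⟨s, hs, (hc hs).add a ha b (h hb)⟩
    · rintro a ⟨s, hs, ha⟩ b ⟨t, ht, hb⟩
      rcases hchain.total hs ht with h | h
      · exact ⟨t, ht, (hc ht).mul a (h ha) b hb⟩
      · exact ⟨s, hs, (hc hs).mul a ha b (h hb)⟩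
    · intro a
      obtain ⟨s, hs⟩ := hne
      exact ⟨s, hs, (hc hs).sq a⟩
    · rintro ⟨s, hs, ha⟩
      exact (hc hs).neg ha) T hT
  have hp : IsPreo Q := hQ.prop
  have key : ∀ a, a ∉ Q → ∃ s ∈ Q, ∃ t ∈ Q, -1 = s + a * t := by
    intro a ha
    by_contra hcon
    have hP : IsPreo {x | ∃ s ∈ Q, ∃ t ∈ Q, x = s + a * t} := by
      refine ⟨?_, ?_, ?_, hcon⟩
      · rintro _ ⟨s, hs, t, ht, rfl⟩ _ ⟨s', hs', t', ht', rfl⟩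
        exact ⟨s + s', hp.add _ hs _ hs', t + t', hp.add _ ht _ ht', by ring⟩
      · rintro _ ⟨s, hs, t, ht, rfl⟩ _ ⟨s', hs', t', ht', rfl⟩
        exact ⟨s * s' + (a * a) * (t * t'), hp.add _ (hp.mul _ hs _ hs') _
          (hp.mul _ (hp.sq a) _ (hp.mul _ ht _ ht')), s * t' + t * s',
          hp.add _ (hp.mul _ hs _ ht') _ (hp.mul _ ht _ hs'), by ring⟩
      · intro x
        exact ⟨x * x, hp.sq x, 0, hp.zero, by ring⟩
    have := hQ.le_of_ge (y := {x | ∃ s ∈ Q, ∃ t ∈ Q, x = s + a * t}) hP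
      (fun x hx => ⟨x, hx, 0, hp.zero, by ring⟩)
    exact ha (this ⟨0, hp.zero, 1, hp.one, by ring⟩)
  have tot : ∀ a, a ∈ Q ∨ -a ∈ Q := by
    intro a
    by_contra! h
    obtain ⟨s, hs, t, ht, e⟩ := key a h.1
    obtain ⟨s', hs', t', ht', e'⟩ := key (-a) h.2
    apply hp.neg
    have : -1 = s + s' + s * s' + (a * a) * (t * t') := by
      linear_combination (1 + s') * e - a * t * e'
    rw [this]
    exact hp.add _ (hp.add _ (hp.add _ hs _ hs') _ (hp.mul _ hs _ hs')) _
      (hp.mul _ (hp.sq a) _ (hp.mul _ ht _ ht'))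
  refine ⟨Q, hTQ, hp, tot, ?_⟩
  have aux : ∀ a b, -(a * b) ∈ Q → a ∈ Q ∨ b ∈ Q := by
    intro a b hab
    by_contra! h
    obtain ⟨s, hs, t, ht, e⟩ := key a h.1
    obtain ⟨s', hs', t', ht', e'⟩ := key b h.2
    apply hp.neg
    have : -1 = s + s' + s * s' + (-(a * b)) * (t * t') := by
      linear_combination (1 + s') * e - a * t * e'
    rw [this]
    exact hp.add _ (hp.add _ (hp.add _ hs _ hs') _ (hp.mul _ hs _ hs')) _
      (hp.mul _ hab _ (hp.mul _ ht _ ht'))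
  intro a b h1 h2
  have k1 := aux a b h2
  have k2 := aux (-a) b (by simpa using h1)
  have k3 := aux a (-b) (by simpa using h1)
  have k4 := aux (-a) (-b) (by simpa using h2)
  tauto

structure OCone {Ω : Type} [Field Ω] (P : Set Ω) : Prop where
  add : ∀ a ∈ P, ∀ b ∈ P, a + b ∈ P
  mul : ∀ a ∈ P, ∀ b ∈ P, a * b ∈ P
  one : (1 : Ω) ∈ P
  anti : ∀ a ∈ P, -a ∈ P → a = 0
  tot : ∀ a ∈ P, ∀ b ∈ P, a - b ∈ P ∨ b - a ∈ P

lemma OCone.zero {Ω : Type} [Field Ω] {P : Set Ω} (h : OCone P) : (0 : Ω) ∈ P := by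
  simpa using h.tot 1 h.one 1 h.one

lemma cone_of_hom {A Ω : Type} [CommRing A] [Field Ω] (φ : A →+* Ω) {Q : Set A} (hQ : IsPreo Q)
    (tot : ∀ a, a ∈ Q ∨ -a ∈ Q) (ker : ∀ a, φ a = 0 ↔ (a ∈ Q ∧ -a ∈ Q)) : OCone (φ '' Q) := by
  refine ⟨?_, ?_, ⟨1, hQ.one, map_one φ⟩, ?_, ?_⟩
  · rintro _ ⟨a, ha, rfl⟩ _ ⟨b, hb, rfl⟩
    exact ⟨a + b, hQ.add _ ha _ hb, map_add φ a b⟩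
  · rintro _ ⟨a, ha, rfl⟩ _ ⟨b, hb, rfl⟩
    exact ⟨a * b, hQ.mul _ ha _ hb, map_mul φ a b⟩
  · rintro _ ⟨a, ha, rfl⟩ ⟨b, hb, e⟩
    have h0 : φ (a + b) = 0 := by rw [map_add, e]; ring
    have h1 := ((ker _).1 h0).2
    refine (ker a).2 ⟨ha, ?_⟩
    have := hQ.add _ hb _ h1
    rwa [show b + -(a + b) = -a by ring] at this
  · rintro _ ⟨a, ha, rfl⟩ _ ⟨b, hb, rfl⟩
    rcases tot (a - b) with h | h
    · exact Or.inl ⟨_, h, map_sub φ a b⟩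
    · exact Or.inr ⟨_, h, by rw [map_neg, map_sub]; ring⟩

/-- support ideal -/
def suppIdeal {A : Type} [CommRing A] (Q : Set A) (hQ : IsPreo Q)
    (tot : ∀ a, a ∈ Q ∨ -a ∈ Q) : Ideal A where
  carrier := {a | a ∈ Q ∧ -a ∈ Q}
  add_mem' := by
    rintro a b ⟨h1, h2⟩ ⟨h3, h4⟩
    refine ⟨hQ.add _ h1 _ h3, ?_⟩
    rw [neg_add]
    exact hQ.add _ h2 _ h4
  zero_mem' := ⟨hQ.zero, by simpa using hQ.zero⟩
  smul_mem' := by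
    rintro c a ⟨h1, h2⟩
    rcases tot c with h | h
    · exact ⟨hQ.mul _ h _ h1, by simpa using hQ.mul _ h _ h2⟩
    · exact ⟨by simpa using hQ.mul _ h _ h2, by simpa using hQ.mul _ h _ h1⟩

lemma suppIdeal_prime {A : Type} [CommRing A] (Q : Set A) (hQ : IsPreo Q)
    (tot : ∀ a, a ∈ Q ∨ -a ∈ Q)
    (pr : ∀ a b, a * b ∈ Q → -(a * b) ∈ Q → (a ∈ Q ∧ -a ∈ Q) ∨ (b ∈ Q ∧ -b ∈ Q)) :
    (suppIdeal Q hQ tot).IsPrime := by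
  refine ⟨?_, ?_⟩
  · intro h
    have : (1 : A) ∈ suppIdeal Q hQ tot := by rw [h]; trivial
    exact hQ.neg this.2
  · intro a b hab
    exact pr a b hab.1 hab.2

section ivt
variable {L : Type} [Field L] [LinearOrder L] [IsStrictOrderedRing L]

noncomputable def WSq (L : Type) [Field L] [LinearOrder L] : AddSubmonoid L[X] :=
  AddSubmonoid.closure {p | ∃ c : L, 0 ≤ c ∧ ∃ g : L[X], p = Polynomial.C c * (g * g)}

lemma WSq.gen {c : L} (hc : 0 ≤ c) (g : L[X]) : Polynomial.C c * (g * g) ∈ WSq L :=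
  AddSubmonoid.subset_closure ⟨c, hc, g, rfl⟩

lemma WSq.nonneg {s : L[X]} (hs : s ∈ WSq L) (x : L) : 0 ≤ s.eval x := by
  induction hs using AddSubmonoid.closure_induction with
  | mem p hp =>
    obtain ⟨c, hc, g, rfl⟩ := hp
    simp only [Polynomial.eval_mul, Polynomial.eval_C]
    exact mul_nonneg hc (mul_self_nonneg _)
  | zero => simp
  | add p q _ _ hp hq => rw [Polynomial.eval_add]; exact add_nonneg hp hq

lemma WSq.mul {s t : L[X]} (hs : s ∈ WSq L) (ht : t ∈ WSq L) : s * t ∈ WSq L := by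
  induction hs using AddSubmonoid.closure_induction with
  | mem p hp =>
    obtain ⟨c, hc, g, rfl⟩ := hp
    induction ht using AddSubmonoid.closure_induction with
    | mem p hp =>
      obtain ⟨c', hc', g', rfl⟩ := hp
      have := WSq.gen (mul_nonneg hc hc') (g * g')
      rw [Polynomial.C_mul] at this
      convert this using 1; ring
    | zero => simp
    | add p q _ _ hp hq => rw [mul_add]; exact (WSq L).add_mem hp hq
  | zero => simp
  | add p q _ _ hp hq => rw [add_mul]; exact (WSq L).add_mem hp hq

lemma WSq.reduce (f : L[X]) (hf : f.natDegree ≠ 0) {s : L[X]} (hs : s ∈ WSq L) :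
    ∃ s' ∈ WSq L, f ∣ s - s' ∧ s'.natDegree ≤ 2 * (f.natDegree - 1) := by
  induction hs using AddSubmonoid.closure_induction with
  | mem p hp =>
    obtain ⟨c, hc, g, rfl⟩ := hp
    refine ⟨_, WSq.gen hc (g % f), ?_, ?_⟩
    · refine ⟨Polynomial.C c * ((g / f) * (g + g % f)), ?_⟩
      have := EuclideanDomain.div_add_mod g f
      linear_combination (-Polynomial.C c * (g + g % f)) * this
    · refine (Polynomial.natDegree_C_mul_le _ _).trans (Polynomial.natDegree_mul_le.trans ?_)
      have := Polynomial.natDegree_mod_lt g hf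
      omega
  | zero => exact ⟨0, (WSq L).zero_mem, by simp, by simp⟩
  | add p q _ _ hp hq =>
    obtain ⟨p', h1, h2, h3⟩ := hp
    obtain ⟨q', h4, h5, h6⟩ := hq
    refine ⟨p' + q', (WSq L).add_mem h1 h4, ?_, ?_⟩
    · rw [show p + q - (p' + q') = (p - p') + (q - q') by ring]
      exact dvd_add h2 h5
    · exact (Polynomial.natDegree_add_le _ _).trans (max_le h3 h6)

lemma not_dvd (d : ℕ) : ∀ (f : L[X]), f.natDegree < d → ∀ a b : L, f.eval a * f.eval b < 0 →
    ∀ s ∈ WSq L, ¬ f ∣ 1 + s := by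
  induction d with
  | zero => intro f hf; omega
  | succ d ih =>
    intro f hf a b hab s hs hdvd
    have hd : f.natDegree ≠ 0 := by
      intro h0
      rw [Polynomial.eq_C_of_natDegree_eq_zero h0, Polynomial.eval_C, Polynomial.eval_C] at hab
      exact absurd (mul_self_nonneg (f.coeff 0)) (not_le.2 hab)
    obtain ⟨s', hs', hdv, hdeg⟩ := WSq.reduce f hd hs
    obtain ⟨h, hh⟩ : f ∣ 1 + s' := by
      have := dvd_sub hdvd hdv
      rwa [show 1 + s - (s - s') = 1 + s' by ring] at this
    have ev : ∀ x, 0 < f.eval x * h.eval x := by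
      intro x
      rw [← Polynomial.eval_mul, ← hh, Polynomial.eval_add, Polynomial.eval_one]
      have := WSq.nonneg hs' x
      linarith
    have hne : f ≠ 0 := by rintro rfl; simp at hd
    have hhne : h ≠ 0 := by
      rintro rfl
      simpa using ev 0
    have hdd : h.natDegree < f.natDegree := by
      have e : (1 + s').natDegree = f.natDegree + h.natDegree := by
        rw [hh, Polynomial.natDegree_mul hne hhne]
      have : (1 + s').natDegree ≤ 2 * (f.natDegree - 1) :=
        (Polynomial.natDegree_add_le _ _).trans (max_le (by simp) hdeg)
      omega
    refine ih h (by omega) a b ?_ s' hs' ⟨f, by rw [hh, mul_comm]⟩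
    have h1 := mul_pos (ev a) (ev b)
    by_contra hc
    push Not at hc
    have := mul_nonpos_of_nonpos_of_nonneg hab.le hc
    nlinarith

lemma exists_root {Ω : Type} [Field Ω] [IsAlgClosed Ω] [Algebra L Ω]
    (hmax : ∀ P : Set Ω, OCone P → (∀ a : L, 0 ≤ a → algebraMap L Ω a ∈ P) →
      ∀ x ∈ P, ∃ a : L, algebraMap L Ω a = x)
    (f : L[X]) (a b : L) (hab : f.eval a * f.eval b < 0) : ∃ t : L, f.eval t = 0 := by
  have hT : IsPreo {p : L[X] | ∃ s ∈ WSq L, f ∣ p - s} := by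
    refine ⟨?_, ?_, ?_, ?_⟩
    · rintro p ⟨s, hs, h⟩ q ⟨t, ht, h'⟩
      refine ⟨s + t, (WSq L).add_mem hs ht, ?_⟩
      rw [show p + q - (s + t) = (p - s) + (q - t) by ring]
      exact dvd_add h h'
    · rintro p ⟨s, hs, h⟩ q ⟨t, ht, h'⟩
      refine ⟨s * t, WSq.mul hs ht, ?_⟩
      rw [show p * q - (s * t) = (p - s) * q + s * (q - t) by ring]
      exact dvd_add (dvd_mul_of_dvd_left h _) (dvd_mul_of_dvd_right h' _)
    · intro p
      refine ⟨p * p, by simpa using WSq.gen (zero_le_one (α := L)) p, by simp⟩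
    · rintro ⟨s, hs, h⟩
      refine not_dvd (f.natDegree + 1) f (by omega) a b hab s hs ?_
      rw [show 1 + s = -(-1 - s) by ring]
      exact (dvd_neg).2 h
  obtain ⟨Q, hTQ, hQ, tot, pr⟩ := hT.exists_max
  let I := suppIdeal Q hQ tot
  have hI : I.IsPrime := suppIdeal_prime Q hQ tot pr
  have hfI : f ∈ I := ⟨hTQ ⟨0, (WSq L).zero_mem, by simp⟩, hTQ ⟨0, (WSq L).zero_mem, by simp⟩⟩
  have hf0 : f ≠ 0 := by rintro rfl; simp at hab
  have hIb : I ≠ ⊥ := by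
    intro h
    rw [h, Ideal.mem_bot] at hfI
    exact hf0 hfI
  have hIm : I.IsMaximal := IsPrime.to_maximal_ideal hIb
  obtain ⟨p, hp⟩ := (IsPrincipalIdealRing.principal I).principal
  have hpI : p ∈ I := by rw [hp]; exact Submodule.mem_span_singleton_self p
  have hp0 : p ≠ 0 := by
    rintro rfl
    exact hIb (by rw [hp]; simp)
  have hpd : p.degree ≠ 0 := by
    intro h
    exact hI.ne_top (Ideal.eq_top_of_isUnit_mem _ hpI (Polynomial.isUnit_iff_degree_eq_zero.2 h))
  obtain ⟨θ, hθ⟩ := IsAlgClosed.exists_aeval_eq_zero Ω p hpd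
  have ker : ∀ q : L[X], (Polynomial.aeval θ : L[X] →ₐ[L] Ω).toRingHom q = 0 ↔ (q ∈ Q ∧ -q ∈ Q) := by
    intro q
    constructor
    · intro h
      by_contra hq
      have hq' : q ∉ I := hq
      obtain ⟨u, hu⟩ := hIm.exists_inv hq'
      obtain ⟨v, hv⟩ := hu
      rw [hp] at hv
      obtain ⟨w, hw⟩ := Ideal.mem_span_singleton.1 hv.1
      have := congrArg (Polynomial.aeval θ) hv.2
      have h' : Polynomial.aeval θ q = 0 := h
      rw [hw] at this
      simp [hθ, h'] at this
    · intro h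
      have hq : q ∈ I := h
      rw [hp] at hq
      obtain ⟨w, rfl⟩ := Ideal.mem_span_singleton.1 hq
      change Polynomial.aeval θ (p * w) = 0
      rw [map_mul, hθ, zero_mul]
  have hcone := cone_of_hom _ hQ tot ker
  have hr := hmax _ hcone (by
    intro c hc
    refine ⟨Polynomial.C c, hTQ ⟨Polynomial.C c, by simpa using WSq.gen hc (1 : L[X]), by simp⟩, ?_⟩
    exact Polynomial.aeval_C θ c)
  have : ∃ t : L, algebraMap L Ω t = θ := by
    rcases tot Polynomial.X with h | h
    · exact hr θ ⟨_, h, Polynomial.aeval_X θ⟩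
    · obtain ⟨t, ht⟩ := hr (-θ) ⟨_, h, by
        change Polynomial.aeval θ (-Polynomial.X) = -θ
        rw [map_neg, Polynomial.aeval_X]⟩
      exact ⟨-t, by rw [map_neg, ht, neg_neg]⟩
  obtain ⟨t, rfl⟩ := this
  refine ⟨t, ?_⟩
  have h1 : Polynomial.aeval (algebraMap L Ω t) f = 0 := (ker f).2 hfI
  rw [Polynomial.aeval_algebraMap_apply] at h1
  have := (map_eq_zero (algebraMap L Ω)).1 h1
  simpa using this

lemma pivt_of_max {Ω : Type} [Field Ω] [IsAlgClosed Ω] [Algebra L Ω]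
    (hmax : ∀ P : Set Ω, OCone P → (∀ a : L, 0 ≤ a → algebraMap L Ω a ∈ P) →
      ∀ x ∈ P, ∃ a : L, algebraMap L Ω a = x) : PIVT L := by
  have key : ∀ (d : ℕ) (f : L[X]), f.natDegree < d → ∀ a b : L, a < b → f.eval a * f.eval b < 0 →
      ∃ c, a < c ∧ c < b ∧ f.eval c = 0 := by
    intro d
    induction d with
    | zero => intro f hf; omega
    | succ d ih =>
      intro f hf a b hlt hab
      obtain ⟨t, ht⟩ := exists_root hmax f a b hab
      by_cases hin : a < t ∧ t < b
      · exact ⟨t, hin.1, hin.2, ht⟩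
      obtain ⟨g, hg⟩ := Polynomial.dvd_iff_isRoot.2 (show f.IsRoot t from ht)
      have hg0 : g ≠ 0 := by rintro rfl; simp [hg] at hab
      have hdeg : g.natDegree < f.natDegree := by
        rw [hg, Polynomial.natDegree_mul (Polynomial.X_sub_C_ne_zero t) hg0,
          Polynomial.natDegree_X_sub_C]
        omega
      have hs : 0 ≤ (a - t) * (b - t) := by
        rw [not_and_or, not_lt, not_lt] at hin
        rcases hin with h | h
        · exact mul_nonneg (by linarith) (by linarith)
        · exact mul_nonneg_of_nonpos_of_nonpos (by linarith) (by linarith)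
      have hg' : g.eval a * g.eval b < 0 := by
        rw [hg] at hab
        simp only [Polynomial.eval_mul, Polynomial.eval_sub, Polynomial.eval_X, Polynomial.eval_C] at hab
        by_contra hc
        push Not at hc
        nlinarith [mul_nonneg hs hc]
      obtain ⟨c, h1, h2, h3⟩ := ih g (by omega) a b hlt hg'
      exact ⟨c, h1, h2, by rw [hg, Polynomial.eval_mul, h3, mul_zero]⟩
  intro f a b hlt h1 h2
  exact key _ f (Nat.lt_succ_self _) a b hlt (mul_neg_of_neg_of_pos h1 h2)
end ivt

end preo

section realclosure

lemma OCone.frac {Ω : Type} [Field Ω] {P : Set Ω} (h : OCone P) :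
    OCone {x : Ω | ∃ a ∈ P, ∃ b ∈ P, b ≠ 0 ∧ x * b = a} := by
  refine ⟨?_, ?_, ⟨1, h.one, 1, h.one, one_ne_zero, by simp⟩, ?_, ?_⟩
  · rintro x ⟨a, ha, b, hb, hb0, e⟩ y ⟨a', ha', b', hb', hb0', e'⟩
    exact ⟨a * b' + a' * b, h.add _ (h.mul _ ha _ hb') _ (h.mul _ ha' _ hb), b * b',
      h.mul _ hb _ hb', mul_ne_zero hb0 hb0', by rw [← e, ← e']; ring⟩
  · rintro x ⟨a, ha, b, hb, hb0, e⟩ y ⟨a', ha', b', hb', hb0', e'⟩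
    exact ⟨a * a', h.mul _ ha _ ha', b * b',
      h.mul _ hb _ hb', mul_ne_zero hb0 hb0', by rw [← e, ← e']; ring⟩
  · rintro x ⟨a, ha, b, hb, hb0, e⟩ ⟨a', ha', b', hb', hb0', e'⟩
    have h1 : a * b' = 0 := by
      refine h.anti _ (h.mul _ ha _ hb') ?_
      have : -(a * b') = a' * b := by rw [← e, ← e']; ring
      rw [this]
      exact h.mul _ ha' _ hb
    have h2 : a = 0 := (mul_eq_zero.1 h1).resolve_right hb0'
    rw [h2] at e
    exact (mul_eq_zero.1 e).resolve_right hb0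
  · rintro x ⟨a, ha, b, hb, hb0, e⟩ y ⟨a', ha', b', hb', hb0', e'⟩
    rcases h.tot _ (h.mul _ ha _ hb') _ (h.mul _ ha' _ hb) with h1 | h1
    · exact Or.inl ⟨_, h1, b * b', h.mul _ hb _ hb', mul_ne_zero hb0 hb0', by rw [← e, ← e']; ring⟩
    · exact Or.inr ⟨_, h1, b * b', h.mul _ hb _ hb', mul_ne_zero hb0 hb0', by rw [← e, ← e']; ring⟩

def OCone.subfield {Ω : Type} [Field Ω] {P : Set Ω} (h : OCone P)
    (hinv : ∀ x ∈ P, x⁻¹ ∈ P) : Subfield Ω where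
  carrier := {x | x ∈ P ∨ -x ∈ P}
  mul_mem' := by
    rintro a b (ha | ha) (hb | hb)
    · exact Or.inl (h.mul _ ha _ hb)
    · right; simpa using h.mul _ ha _ hb
    · right; simpa using h.mul _ ha _ hb
    · left; simpa using h.mul _ ha _ hb
  one_mem' := Or.inl h.one
  add_mem' := by
    rintro a b (ha | ha) (hb | hb)
    · exact Or.inl (h.add _ ha _ hb)
    · rcases h.tot _ ha _ hb with h' | h'
      · left; simpa using h'
      · right; rwa [show -(a + b) = -b - a by ring]
    · rcases h.tot _ ha _ hb with h' | h'
      · right; rwa [show -(a + b) = -a - b by ring]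
      · left; rwa [show a + b = b - -a by ring]
    · right
      rw [neg_add]
      exact h.add _ ha _ hb
  zero_mem' := Or.inl h.zero
  neg_mem' := by
    rintro a (ha | ha)
    · right; simpa using ha
    · exact Or.inl ha
  inv_mem' := by
    rintro a (ha | ha)
    · exact Or.inl (hinv _ ha)
    · right
      rw [← inv_neg]
      exact hinv _ ha

theorem real_closure {A : Type} [CommRing A] {T : Set A} (hT : IsPreo T) :
    ∃ (L : Type) (_ : Field L) (_ : LinearOrder L) (_ : IsStrictOrderedRing L), PIVT L ∧
      ∃ φ : A →+* L, ∀ t ∈ T, 0 ≤ φ t := by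
  classical
  obtain ⟨Q, hTQ, hQ, tot, pr⟩ := hT.exists_max
  let I := suppIdeal Q hQ tot
  haveI hI : I.IsPrime := suppIdeal_prime Q hQ tot pr
  let Ω := AlgebraicClosure (FractionRing (A ⧸ I))
  let φ : A →+* Ω := (algebraMap (FractionRing (A ⧸ I)) Ω).comp
    ((algebraMap (A ⧸ I) (FractionRing (A ⧸ I))).comp (Ideal.Quotient.mk I))
  have ker : ∀ a, φ a = 0 ↔ (a ∈ Q ∧ -a ∈ Q) := by
    intro a
    change algebraMap (FractionRing (A ⧸ I)) Ω (algebraMap (A ⧸ I) (FractionRing (A ⧸ I))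
      (Ideal.Quotient.mk I a)) = 0 ↔ a ∈ I
    rw [map_eq_zero, ← Ideal.Quotient.eq_zero_iff_mem]
    constructor
    · intro h
      exact (IsFractionRing.injective (A ⧸ I) (FractionRing (A ⧸ I))) (by rw [h, map_zero])
    · intro h; rw [h, map_zero]
  have hc0 : OCone (φ '' Q) := cone_of_hom φ hQ tot ker
  obtain ⟨P, hsub, hPmax⟩ := zorn_subset_nonempty {P : Set Ω | OCone P} (by
    intro c hc hchain hne
    refine ⟨⋃₀ c, ?_, fun s hs => Set.subset_sUnion_of_mem hs⟩
    have two : ∀ a ∈ ⋃₀ c, ∀ b ∈ ⋃₀ c, ∃ s ∈ c, a ∈ s ∧ b ∈ s := by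
      rintro a ⟨s, hs, ha⟩ b ⟨t, ht, hb⟩
      rcases hchain.total hs ht with h | h
      · exact ⟨t, ht, h ha, hb⟩
      · exact ⟨s, hs, ha, h hb⟩
    refine ⟨?_, ?_, ?_, ?_, ?_⟩
    · intro a ha b hb
      obtain ⟨s, hs, h1, h2⟩ := two a ha b hb
      exact ⟨s, hs, (hc hs).add _ h1 _ h2⟩
    · intro a ha b hb
      obtain ⟨s, hs, h1, h2⟩ := two a ha b hb
      exact ⟨s, hs, (hc hs).mul _ h1 _ h2⟩
    · obtain ⟨s, hs⟩ := hne
      exact ⟨s, hs, (hc hs).one⟩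
    · intro a ha hb
      obtain ⟨s, hs, h1, h2⟩ := two a ha _ hb
      exact (hc hs).anti _ h1 h2
    · intro a ha b hb
      obtain ⟨s, hs, h1, h2⟩ := two a ha b hb
      rcases (hc hs).tot _ h1 _ h2 with h | h
      · exact Or.inl ⟨s, hs, h⟩
      · exact Or.inr ⟨s, hs, h⟩) _ hc0
  have hP : OCone P := hPmax.prop
  have hinv : ∀ x ∈ P, x⁻¹ ∈ P := by
    intro x hx
    by_cases hx0 : x = 0
    · rw [hx0, inv_zero]; exact hP.zero
    have := hPmax.le_of_ge (y := {x : Ω | ∃ a ∈ P, ∃ b ∈ P, b ≠ 0 ∧ x * b = a}) hP.frac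
      (fun y hy => ⟨y, hy, 1, hP.one, one_ne_zero, by simp⟩)
    exact this ⟨1, hP.one, x, hx, hx0, inv_mul_cancel₀ hx0⟩
  let E : Subfield Ω := hP.subfield hinv
  have hE : ∀ x : Ω, x ∈ E ↔ (x ∈ P ∨ -x ∈ P) := fun x => Iff.rfl
  letI lo : LinearOrder E :=
    { le := fun a b => (b : Ω) - a ∈ P
      le_refl := fun a => by
        change (a : Ω) - a ∈ P
        rw [sub_self]; exact hP.zero
      le_trans := fun a b c h1 h2 => by
        change (c : Ω) - a ∈ P
        have := hP.add _ h1 _ h2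
        rwa [show (b : Ω) - a + (c - b) = c - a by ring] at this
      le_antisymm := fun a b h1 h2 => by
        have h2' : -((b : Ω) - a) ∈ P := by rw [neg_sub]; exact h2
        have := hP.anti _ h1 h2'
        exact Subtype.ext (sub_eq_zero.1 this).symm
      le_total := fun a b => by
        have : ((b - a : E) : Ω) ∈ E := (b - a).2
        rcases (hE _).1 this with h | h
        · left; exact h
        · right
          change (a : Ω) - b ∈ P
          rwa [show ((a : Ω) - b) = -((b - a : E) : Ω) by push_cast; ring]
      toDecidableLE := Classical.decRel _ }
  have le_def : ∀ a b : E, a ≤ b ↔ (b : Ω) - a ∈ P := fun a b => Iff.rfl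
  have le_def0 : ∀ b : E, 0 ≤ b ↔ (b : Ω) ∈ P := fun b => by rw [le_def]; simp
  haveI : IsOrderedAddMonoid E := ⟨fun a b h c => by
    rw [le_def] at h ⊢
    convert h using 1
    push_cast; ring, fun a b h c => by
    rw [le_def] at h ⊢
    convert h using 1
    push_cast; ring⟩
  haveI : ZeroLEOneClass E := ⟨by rw [le_def0]; exact hP.one⟩
  haveI so : IsStrictOrderedRing E := IsStrictOrderedRing.of_mul_pos (by
    intro a b ha hb
    refine lt_of_le_of_ne ?_ (mul_ne_zero ha.ne' hb.ne').symm
    rw [le_def0]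
    exact hP.mul _ ((le_def0 a).1 ha.le) _ ((le_def0 b).1 hb.le))
  refine ⟨E, inferInstance, lo, so, ?_, ?_⟩
  · refine pivt_of_max (Ω := Ω) ?_
    intro P' hP' hsubP x hx
    have hPP : P ⊆ P' := by
      intro y hy
      exact hsubP ⟨y, Or.inl hy⟩ ((le_def0 _).2 hy)
    have := hPmax.le_of_ge hP' hPP hx
    exact ⟨⟨x, Or.inl this⟩, rfl⟩
  · have hφ : ∀ a, φ a ∈ E := by
      intro a
      rcases tot a with h | h
      · exact Or.inl (hsub ⟨a, h, rfl⟩)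
      · exact Or.inr (hsub ⟨-a, h, map_neg φ a⟩)
    refine ⟨φ.codRestrict E hφ, fun t ht => ?_⟩
    rw [le_def0]
    exact hsub ⟨t, hTQ ht, rfl⟩

theorem preo_real {n : ℕ} {T : Set (MvPolynomial (Fin n) ℝ)} (hT : IsPreo T)
    (F : Finset (MvPolynomial (Fin n) ℝ)) (hF : ∀ f ∈ F, f ∈ T) :
    ∃ v : Fin n → ℝ, ∀ f ∈ F, 0 ≤ MvPolynomial.eval v f := by
  obtain ⟨L, _, _, _, hL, φ, hφ⟩ := real_closure hT
  obtain ⟨v, hv⟩ := transfer hL n φ F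
  refine ⟨v, fun f hf => ?_⟩
  have h1 := hφ f (hF f hf)
  have h2 := hv f hf
  rw [← sign_nonneg_iff] at h1 ⊢
  rwa [← h2]

end realclosure

section putinar

structure IsQM {A : Type} [CommRing A] (M : Set A) : Prop where
  one : (1 : A) ∈ M
  add : ∀ a ∈ M, ∀ b ∈ M, a + b ∈ M
  sqm : ∀ a, ∀ m ∈ M, a * a * m ∈ M

variable {n : ℕ}


lemma IsQM.sq {A : Type} [CommRing A] {M : Set A} (h : IsQM M) (a : A) : a * a ∈ M := by
  simpa using h.sqm a 1 h.one

lemma IsQM.zero {A : Type} [CommRing A] {M : Set A} (h : IsQM M) : (0 : A) ∈ M := by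
  simpa using h.sq 0

lemma IsQM.sos_mul {A : Type} [CommRing A] {M : Set A} (h : IsQM M) {s : A} (hs : IsSumSq s)
    {m : A} (hm : m ∈ M) : s * m ∈ M := by
  induction hs with
  | zero => simpa using h.zero
  | sq_add a _ ih => rw [add_mul]; exact h.add _ (h.sqm a m hm) _ ih

lemma IsQM.sos {A : Type} [CommRing A] {M : Set A} (h : IsQM M) {s : A} (hs : IsSumSq s) :
    s ∈ M := by simpa using h.sos_mul hs h.one

lemma isSumSq_C {c : ℝ} (hc : 0 ≤ c) : IsSumSq (C c : (MvPolynomial (Fin n) ℝ)) := by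
  have : (C c : (MvPolynomial (Fin n) ℝ)) = C (Real.sqrt c) * C (Real.sqrt c) := by
    rw [← C_mul, Real.mul_self_sqrt hc]
  rw [this]
  exact IsSumSq.mul_self _

lemma IsQM.cmul {M : Set (MvPolynomial (Fin n) ℝ)} (h : IsQM M) {c : ℝ} (hc : 0 ≤ c) {m : (MvPolynomial (Fin n) ℝ)} (hm : m ∈ M) :
    C c * m ∈ M := h.sos_mul (isSumSq_C hc) hm

lemma IsQM.const {M : Set (MvPolynomial (Fin n) ℝ)} (h : IsQM M) {c : ℝ} (hc : 0 ≤ c) : (C c : (MvPolynomial (Fin n) ℝ)) ∈ M :=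
  h.sos (isSumSq_C hc)

lemma IsQM.const_le {M : Set (MvPolynomial (Fin n) ℝ)} (h : IsQM M) {c d : ℝ} (hc : c ≤ d) {p : (MvPolynomial (Fin n) ℝ)}
    (hp : C c + p ∈ M) : C d + p ∈ M := by
  have := h.add _ hp _ (h.const (sub_nonneg.2 hc))
  convert this using 1
  rw [C_sub]; ring

lemma IsQM.of_cmul {M : Set (MvPolynomial (Fin n) ℝ)} (h : IsQM M) {c : ℝ} (hc : 0 < c) {m : (MvPolynomial (Fin n) ℝ)} (hm : C c * m ∈ M) :
    m ∈ M := by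
  have := h.cmul (inv_nonneg.2 hc.le) hm
  rwa [← mul_assoc, ← C_mul, inv_mul_cancel₀ hc.ne', C_1, one_mul] at this

lemma IsQM.neg_const {M : Set (MvPolynomial (Fin n) ℝ)} (h : IsQM M) (hn : (-1 : (MvPolynomial (Fin n) ℝ)) ∉ M) {c : ℝ} (hc : (C c : (MvPolynomial (Fin n) ℝ)) ∈ M) :
    0 ≤ c := by
  by_contra hlt
  push Not at hlt
  apply hn
  apply h.of_cmul (c := -c) (by linarith)
  convert hc using 1
  rw [C_neg]; ring

/-- boundedness -/
lemma IsQM.bdd {M : Set (MvPolynomial (Fin n) ℝ)} (h : IsQM M) {N : ℝ} (hN : C N - ∑ i, X i * X i ∈ M) (p : (MvPolynomial (Fin n) ℝ)) :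
    ∃ B : ℝ, 0 ≤ B ∧ C B - p * p ∈ M := by
  induction p using MvPolynomial.induction_on with
  | C a => exact ⟨a * a, mul_self_nonneg a, by rw [C_mul, sub_self]; exact h.zero⟩
  | add p q hp hq =>
    obtain ⟨B, hB, h1⟩ := hp
    obtain ⟨B', hB', h2⟩ := hq
    refine ⟨2 * (B + B'), by positivity, ?_⟩
    have := h.add _ (h.add _ (h.cmul zero_le_two h1) _ (h.cmul zero_le_two h2)) _ (h.sq (p - q))
    convert this using 1
    simp only [C_mul, C_add, map_ofNat]
    ring
  | mul_X p i hp =>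
    obtain ⟨B, hB, h1⟩ := hp
    have hX : C (max N 0) - X i * X i ∈ M := by
      have e1 := h.const_le (le_max_left N 0) (p := - ∑ i, X i * X i) (by simpa [sub_eq_add_neg] using hN)
      have e2 : ∑ j ∈ Finset.univ.erase i, X j * X j ∈ M := by
        apply h.sos
        exact IsSumSq.sum (fun j _ => IsSumSq.mul_self _)
      have := h.add _ e1 _ e2
      rw [← Finset.add_sum_erase _ _ (Finset.mem_univ i)] at this
      convert this using 1
      ring
    refine ⟨B * max N 0, mul_nonneg hB (le_max_right _ _), ?_⟩
    have := h.add _ (h.cmul hB hX) _ (h.sqm (X i) _ h1)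
    convert this using 1
    rw [C_mul]; ring

lemma IsQM.arch {M : Set (MvPolynomial (Fin n) ℝ)} (h : IsQM M) {N : ℝ} (hN : C N - ∑ i, X i * X i ∈ M) (p : (MvPolynomial (Fin n) ℝ)) :
    ∃ B : ℝ, C B - p ∈ M := by
  obtain ⟨B, -, hB⟩ := h.bdd hN p
  refine ⟨(B + 1) / 2, h.of_cmul zero_lt_two ?_⟩
  have := h.add _ hB _ (h.sq (p - 1))
  convert this using 1
  rw [mul_sub, ← C_mul, mul_div_cancel₀ _ two_ne_zero, C_add, C_1, map_ofNat]
  ring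

lemma IsQM.trick {M : Set (MvPolynomial (Fin n) ℝ)} (h : IsQM M) (harch : ∀ p : (MvPolynomial (Fin n) ℝ), ∃ B : ℝ, C B - p ∈ M) {f s m : (MvPolynomial (Fin n) ℝ)}
    (hs : IsSumSq s) (hm : m ∈ M) (e : f * s = 1 + m) : f ∈ M := by
  obtain ⟨N1, h1⟩ := harch s
  obtain ⟨N2, h2⟩ := harch (s * s * f)
  obtain ⟨r0, h3⟩ := harch (-f)
  obtain ⟨k, hk0, hk1, hk2⟩ : ∃ k : ℝ, 0 < k ∧ N1 ≤ 2 * k ∧ N2 ≤ 2 * k - 1 := by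
    refine ⟨max 1 (max N1 (N2 + 1)), ?_, ?_, ?_⟩ <;>
    · have a1 := le_max_left 1 (max N1 (N2 + 1))
      have a2 := (le_max_left N1 (N2 + 1)).trans (le_max_right 1 (max N1 (N2 + 1)))
      have a3 := (le_max_right N1 (N2 + 1)).trans (le_max_right 1 (max N1 (N2 + 1)))
      linarith
  have h1' : C (2 * k) + -s ∈ M := h.const_le hk1 (by simpa [sub_eq_add_neg] using h1)
  have h2' : C (2 * k - 1) + -(s * s * f) ∈ M :=
    h.const_le hk2 (by simpa [sub_eq_add_neg] using h2)
  have step : ∀ r : ℝ, 0 ≤ r → C r + f ∈ M → C (r - (k * k)⁻¹) + f ∈ M := by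
    intro r hr hf
    apply h.of_cmul (mul_pos hk0 hk0)
    have := h.add _ (h.add _ (h.add _ (h.sqm (C k - s) _ hf) _
      (h.cmul (by positivity : (0:ℝ) ≤ 2 * k) hm)) _ (h.cmul hr (h.sos_mul hs h1'))) _ h2'
    convert this using 1
    have hm' : m = f * s - 1 := by rw [e]; ring
    have hkk : (C (k * k) : (MvPolynomial (Fin n) ℝ)) * C ((k * k)⁻¹) = 1 := by
      rw [← C_mul, mul_inv_cancel₀ (by positivity), C_1]
    rw [mul_add, C_sub, mul_sub, hkk, hm']
    simp only [C_mul, C_sub, C_1, map_ofNat]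
    ring
  have all : ∀ j : ℕ, C (max (r0 - j * (k * k)⁻¹) 0) + f ∈ M := by
    intro j
    induction j with
    | zero => exact h.const_le (c := r0) (by simp) (by simpa using h3)
    | succ j ih =>
      rcases le_total (r0 - j * (k * k)⁻¹) 0 with hc | hc
      · rw [max_eq_right hc] at ih
        exact h.const_le (le_max_right _ _) ih
      · rw [max_eq_left hc] at ih
        refine h.const_le ?_ (step _ hc ih)
        refine le_trans (le_of_eq ?_) (le_max_left _ _)
        push_cast; ring
  obtain ⟨j, hj⟩ := exists_nat_ge (r0 * (k * k))
  have := all j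
  rw [max_eq_right] at this
  · simpa using this
  · have hkk : 0 < k * k := mul_pos hk0 hk0
    rw [sub_nonpos, ← div_eq_mul_inv, le_div_iff₀ hkk]
    exact hj

lemma IsQM.exists_max {A : Type} [CommRing A] {T : Set A} (hT : IsQM T)
    (hneg : (-1 : A) ∉ T) (half : A) (hhalf : half + half = 1) :
    ∃ Q : Set A, T ⊆ Q ∧ IsQM Q ∧ (-1 : A) ∉ Q ∧ (∀ a, a ∈ Q ∨ -a ∈ Q) := by
  obtain ⟨Q, hTQ, hQ⟩ := zorn_subset_nonempty {Q : Set A | IsQM Q ∧ (-1 : A) ∉ Q} (by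
    intro c hc hchain hne
    refine ⟨⋃₀ c, ⟨⟨?_, ?_, ?_⟩, ?_⟩, fun s hs => Set.subset_sUnion_of_mem hs⟩
    · obtain ⟨s, hs⟩ := hne
      exact ⟨s, hs, (hc hs).1.one⟩
    · rintro a ⟨s, hs, ha⟩ b ⟨t, ht, hb⟩
      rcases hchain.total hs ht with h | h
      · exact ⟨t, ht, (hc ht).1.add a (h ha) b hb⟩
      · exact ⟨s, hs, (hc hs).1.add a ha b (h hb)⟩
    · rintro a m ⟨s, hs, ha⟩
      exact ⟨s, hs, (hc hs).1.sqm a m ha⟩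
    · rintro ⟨s, hs, ha⟩
      exact (hc hs).2 ha) T ⟨hT, hneg⟩
  obtain ⟨hp, hn⟩ : IsQM Q ∧ (-1 : A) ∉ Q := hQ.prop
  refine ⟨Q, hTQ, hp, hn, ?_⟩
  have key : ∀ a, a ∉ Q → ∃ q ∈ Q, ∃ s : A, IsSumSq s ∧ -1 = q + s * a := by
    intro a ha
    by_contra hcon
    have hP : IsQM {x | ∃ q ∈ Q, ∃ s : A, IsSumSq s ∧ x = q + s * a} := by
      refine ⟨⟨1, hp.one, 0, IsSumSq.zero, by ring⟩, ?_, ?_⟩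
      · rintro _ ⟨q, hq, s, hs, rfl⟩ _ ⟨q', hq', s', hs', rfl⟩
        exact ⟨q + q', hp.add _ hq _ hq', s + s', hs.add hs', by ring⟩
      · rintro b _ ⟨q, hq, s, hs, rfl⟩
        exact ⟨b * b * q, hp.sqm b q hq, b * b * s, (IsSumSq.mul_self b).mul hs, by ring⟩
    have := hQ.le_of_ge (y := {x | ∃ q ∈ Q, ∃ s : A, IsSumSq s ∧ x = q + s * a}) ⟨hP, hcon⟩
      (fun x hx => ⟨x, hx, 0, IsSumSq.zero, by ring⟩)
    exact ha (this ⟨0, hp.zero, 1, by simpa using IsSumSq.mul_self (1 : A), by ring⟩)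
  intro a
  by_contra! h
  obtain ⟨q, hq, s, hs, e⟩ := key a h.1
  obtain ⟨q', hq', s', hs', e'⟩ := key (-a) h.2
  have hsn : -s ∈ Q := by
    have : -s = s' + s' * q + s * q' := by linear_combination s * e' + s' * e
    rw [this]
    exact hp.add _ (hp.add _ (hp.sos hs') _ (hp.sos_mul hs' hq)) _ (hp.sos_mul hs hq')
  apply hn
  have : s * a = (half * (a + 1)) * (half * (a + 1)) * s + (half * (a - 1)) * (half * (a - 1)) * (-s) := by
    have h4 : half * half + half * half + (half * half + half * half) = 1 := by
      linear_combination (half + half + 1) * hhalf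
    linear_combination (-(s * a)) * h4
  rw [e, this]
  exact hp.add _ hq _ (hp.add _ (hp.sqm _ _ (hp.sos hs)) _ (hp.sqm _ _ hsn))

/-- `a` is infinitely close to `r` -/
def Near (Q : Set (MvPolynomial (Fin n) ℝ)) (a : (MvPolynomial (Fin n) ℝ)) (r : ℝ) : Prop :=
  ∀ ε : ℝ, 0 < ε → C (r + ε) - a ∈ Q ∧ a - C (r - ε) ∈ Q

lemma Near.add {Q : Set (MvPolynomial (Fin n) ℝ)} (hQ : IsQM Q) {a b : (MvPolynomial (Fin n) ℝ)} {r s : ℝ} (ha : Near Q a r) (hb : Near Q b s) :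
    Near Q (a + b) (r + s) := by
  intro ε hε
  obtain ⟨h1, h2⟩ := ha (ε / 2) (by linarith)
  obtain ⟨h3, h4⟩ := hb (ε / 2) (by linarith)
  constructor
  · convert hQ.add _ h1 _ h3 using 1
    rw [show r + s + ε = (r + ε / 2) + (s + ε / 2) by ring, C_add]; ring
  · convert hQ.add _ h2 _ h4 using 1
    rw [show r + s - ε = (r - ε / 2) + (s - ε / 2) by ring, C_add]; ring

lemma Near.const {Q : Set (MvPolynomial (Fin n) ℝ)} (hQ : IsQM Q) (r : ℝ) : Near Q (C r) r := by
  intro ε hε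
  constructor
  · rw [← C_sub]; exact hQ.const (by linarith)
  · rw [← C_sub]; exact hQ.const (by linarith)

lemma Near.neg {Q : Set (MvPolynomial (Fin n) ℝ)} {a : (MvPolynomial (Fin n) ℝ)} {r : ℝ} (ha : Near Q a r) : Near Q (-a) (-r) := by
  intro ε hε
  obtain ⟨h1, h2⟩ := ha ε hε
  constructor
  · convert h2 using 1
    rw [show -r + ε = -(r - ε) by ring, C_neg]; ring
  · convert h1 using 1
    rw [show -r - ε = -(r + ε) by ring, C_neg]; ring

lemma Near.pmul {Q : Set (MvPolynomial (Fin n) ℝ)} (hQ : IsQM Q) {a : (MvPolynomial (Fin n) ℝ)} {r : ℝ} (ha : Near Q a r) {c : ℝ} (hc : 0 < c) :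
    Near Q (C c * a) (c * r) := by
  intro ε hε
  obtain ⟨h1, h2⟩ := ha (ε / c) (by positivity)
  constructor
  · convert hQ.cmul hc.le h1 using 1
    rw [mul_sub, ← C_mul]; congr 2; field_simp
  · convert hQ.cmul hc.le h2 using 1
    rw [mul_sub, ← C_mul]; congr 2; field_simp

lemma Near.cmul {Q : Set (MvPolynomial (Fin n) ℝ)} (hQ : IsQM Q) {a : (MvPolynomial (Fin n) ℝ)} {r : ℝ} (ha : Near Q a r) (c : ℝ) :
    Near Q (C c * a) (c * r) := by
  rcases lt_trichotomy c 0 with h | h | h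
  · have := (ha.pmul hQ (c := -c) (by linarith)).neg
    convert this using 1
    · rw [C_neg]; ring
    · ring
  · rw [h, C_0, zero_mul, zero_mul, ← C_0]; exact Near.const hQ 0
  · exact ha.pmul hQ h

lemma Near.sq0 {Q : Set (MvPolynomial (Fin n) ℝ)} (hQ : IsQM Q) {a : (MvPolynomial (Fin n) ℝ)} (ha : Near Q a 0) : Near Q (a * a) 0 := by
  intro ε hε
  constructor
  · set δ := Real.sqrt ε with hδ
    have hpos : 0 < δ := Real.sqrt_pos.2 hε
    obtain ⟨h1, h2⟩ := ha δ hpos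
    apply hQ.of_cmul (c := 2 * δ) (by positivity)
    have := hQ.add _ (hQ.sqm (C δ + a) _ h1) _ (hQ.sqm (C δ - a) _ h2)
    convert this using 1
    have : ε = δ * δ := (Real.mul_self_sqrt hε.le).symm
    rw [this]
    simp only [zero_add, zero_sub, C_neg, C_mul, map_ofNat]
    ring
  · have := hQ.add _ (hQ.sq a) _ (hQ.const hε.le)
    convert this using 1
    rw [zero_sub, C_neg]; ring

lemma Near.sq {Q : Set (MvPolynomial (Fin n) ℝ)} (hQ : IsQM Q) {a : (MvPolynomial (Fin n) ℝ)} {r : ℝ} (ha : Near Q a r) :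
    Near Q (a * a) (r * r) := by
  have h1 : Near Q (a + C (-r)) 0 := by
    simpa using ha.add hQ (Near.const hQ (-r))
  have h2 := ((h1.sq0 hQ).add hQ (ha.cmul hQ (2 * r))).add hQ (Near.const hQ (-(r * r)))
  convert h2 using 1
  · simp only [C_neg, C_mul, map_ofNat]; ring
  · ring

lemma Near.mul {Q : Set (MvPolynomial (Fin n) ℝ)} (hQ : IsQM Q) {a b : (MvPolynomial (Fin n) ℝ)} {r s : ℝ} (ha : Near Q a r) (hb : Near Q b s) :
    Near Q (a * b) (r * s) := by
  have h2 := (((ha.add hQ hb).sq hQ).add hQ ((ha.add hQ hb.neg).sq hQ).neg).cmul hQ (1 / 4)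
  convert h2 using 1
  · have : (C (1 / 4) : (MvPolynomial (Fin n) ℝ)) * 4 = 1 := by
      rw [← map_ofNat (C : ℝ →+* (MvPolynomial (Fin n) ℝ)) 4, ← C_mul]; norm_num
    linear_combination (-(a * b)) * this
  · ring

lemma Near.nonneg {Q : Set (MvPolynomial (Fin n) ℝ)} (hQ : IsQM Q) (hn : (-1 : (MvPolynomial (Fin n) ℝ)) ∉ Q) {a : (MvPolynomial (Fin n) ℝ)} {r : ℝ}
    (ha : Near Q a r) (h : a ∈ Q) : 0 ≤ r := by
  by_contra hlt
  push Not at hlt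
  have h1 := hQ.add _ (ha (-r / 2) (by linarith)).1 _ h
  rw [sub_add_cancel] at h1
  have := hQ.neg_const hn h1
  linarith

lemma Near.exists {Q : Set (MvPolynomial (Fin n) ℝ)} (hQ : IsQM Q) (hn : (-1 : (MvPolynomial (Fin n) ℝ)) ∉ Q)
    (harch : ∀ p : (MvPolynomial (Fin n) ℝ), ∃ B : ℝ, C B - p ∈ Q) (tot : ∀ a, a ∈ Q ∨ -a ∈ Q) (a : (MvPolynomial (Fin n) ℝ)) :
    ∃ r, Near Q a r := by
  let S : Set ℝ := {r | a - C r ∈ Q}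
  obtain ⟨B, hB⟩ := harch a
  obtain ⟨B', hB'⟩ := harch (-a)
  have hne : S.Nonempty := ⟨-B', by
    change a - C (-B') ∈ Q
    convert hB' using 1
    rw [C_neg]; ring⟩
  have hb : BddAbove S := ⟨B, fun r hr => by
    have := hQ.add _ hB _ hr
    rw [show C B - a + (a - C r) = C (B - r) by rw [C_sub]; ring] at this
    have := hQ.neg_const hn this
    linarith⟩
  refine ⟨sSup S, fun ε hε => ⟨?_, ?_⟩⟩
  · rcases tot (C (sSup S + ε) - a) with h | h
    · exact h
    · exfalso
      rw [neg_sub] at h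
      have := le_csSup hb (show sSup S + ε ∈ S from h)
      linarith
  · obtain ⟨r, hr, hlt⟩ := exists_lt_of_lt_csSup hne (show sSup S - ε < sSup S by linarith)
    have := hQ.const_le (c := -r) (d := -(sSup S - ε)) (by linarith) (p := a) (by
      convert (show a - C r ∈ Q from hr) using 1
      rw [C_neg]; ring)
    convert this using 1
    rw [C_neg]; ring

theorem arch_putinar {M : Set (MvPolynomial (Fin n) ℝ)} (hM : IsQM M) (harch : ∀ p : (MvPolynomial (Fin n) ℝ), ∃ B : ℝ, C B - p ∈ M) (f : (MvPolynomial (Fin n) ℝ))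
    (hf : ∀ x, (∀ m ∈ M, 0 ≤ eval x m) → 0 < eval x f) : f ∈ M := by
  by_contra hfM
  let T : Set (MvPolynomial (Fin n) ℝ) := {p | ∃ m ∈ M, ∃ s : (MvPolynomial (Fin n) ℝ), IsSumSq s ∧ p = m - f * s}
  have hT : IsQM T := by
    refine ⟨⟨1, hM.one, 0, IsSumSq.zero, by ring⟩, ?_, ?_⟩
    · rintro _ ⟨q, hq, s, hs, rfl⟩ _ ⟨q', hq', s', hs', rfl⟩
      exact ⟨q + q', hM.add _ hq _ hq', s + s', hs.add hs', by ring⟩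
    · rintro b _ ⟨q, hq, s, hs, rfl⟩
      exact ⟨b * b * q, hM.sqm b q hq, b * b * s, (IsSumSq.mul_self b).mul hs, by ring⟩
  have hMT : M ⊆ T := fun m hm => ⟨m, hm, 0, IsSumSq.zero, by ring⟩
  have hTn : (-1 : (MvPolynomial (Fin n) ℝ)) ∉ T := by
    rintro ⟨m, hm, s, hs, e⟩
    exact hfM (hM.trick harch hs hm (by linear_combination e))
  obtain ⟨Q, hTQ, hQ, hn, tot⟩ := hT.exists_max hTn (C (1 / 2)) (by
    rw [← C_add]; norm_num)
  have hex : ∀ a : (MvPolynomial (Fin n) ℝ), ∃ r, Near Q a r := Near.exists hQ hn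
    (fun p => (harch p).imp fun B hB => hTQ (hMT hB)) tot
  choose x hx using fun i : Fin n => hex (X i)
  have hall : ∀ p : (MvPolynomial (Fin n) ℝ), Near Q p (eval x p) := by
    intro p
    induction p using MvPolynomial.induction_on with
    | C a => rw [eval_C]; exact Near.const hQ a
    | add p q hp hq => rw [map_add]; exact hp.add hQ hq
    | mul_X p i hp => rw [map_mul, eval_X]; exact hp.mul hQ (hx i)
  have h1 := hf x (fun m hm => (hall m).nonneg hQ hn (hTQ (hMT hm)))
  have h2 := (hall (-f)).nonneg hQ hn (hTQ ⟨0, hM.zero, 1, by simpa using IsSumSq.mul_self (1 : (MvPolynomial (Fin n) ℝ)),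
    by ring⟩)
  rw [map_neg] at h2
  linarith

/-- Wörmann's trick. -/
theorem wormann (h : (MvPolynomial (Fin n) ℝ)) (R : ℝ) (hR : ∀ x : Fin n → ℝ, 0 ≤ eval x h → ∑ i, x i * x i < R) :
    ∃ N : ℝ, ∃ s₀ s₁ : (MvPolynomial (Fin n) ℝ), IsSumSq s₀ ∧ IsSumSq s₁ ∧ C N - ∑ i, X i * X i = s₀ + s₁ * h := by
  classical
  let T : Set (MvPolynomial (Fin n) ℝ) := {p | ∃ s₀ s₁ : (MvPolynomial (Fin n) ℝ), IsSumSq s₀ ∧ IsSumSq s₁ ∧ p = s₀ + s₁ * h}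
  have Tadd : ∀ a ∈ T, ∀ b ∈ T, a + b ∈ T := by
    rintro _ ⟨s, t, hs, ht, rfl⟩ _ ⟨s', t', hs', ht', rfl⟩
    exact ⟨s + s', t + t', hs.add hs', ht.add ht', by ring⟩
  have Tmul : ∀ a ∈ T, ∀ b ∈ T, a * b ∈ T := by
    rintro _ ⟨s, t, hs, ht, rfl⟩ _ ⟨s', t', hs', ht', rfl⟩
    exact ⟨s * s' + h * h * (t * t'), s * t' + t * s',
      (hs.mul hs').add ((IsSumSq.mul_self h).mul (ht.mul ht')), (hs.mul ht').add (ht.mul hs'),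
      by ring⟩
  have Tsos : ∀ s, IsSumSq s → s ∈ T := fun s hs => ⟨s, 0, hs, IsSumSq.zero, by ring⟩
  have Tsq : ∀ a, a * a ∈ T := fun a => Tsos _ (IsSumSq.mul_self a)
  have T0 : (0 : (MvPolynomial (Fin n) ℝ)) ∈ T := by simpa using Tsq 0
  have T1 : (1 : (MvPolynomial (Fin n) ℝ)) ∈ T := by simpa using Tsq 1
  have Th : h ∈ T := ⟨0, 1, IsSumSq.zero, by simpa using IsSumSq.mul_self (1 : (MvPolynomial (Fin n) ℝ)), by ring⟩
  have TC : ∀ c : ℝ, 0 ≤ c → (C c : (MvPolynomial (Fin n) ℝ)) ∈ T := fun c hc => Tsos _ (isSumSq_C hc)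
  set nn : (MvPolynomial (Fin n) ℝ) := ∑ i, X i * X i with hnn
  have Tnn : nn ∈ T := Tsos _ (IsSumSq.sum (fun i _ => IsSumSq.mul_self _))
  -- wlog the bound is nonnegative
  obtain ⟨R', hR'0, hR'⟩ : ∃ R' : ℝ, 0 ≤ R' ∧ ∀ x : Fin n → ℝ, 0 ≤ eval x h → ∑ i, x i * x i < R' :=
    ⟨max R 0, le_max_right _ _, fun x hx => (hR x hx).trans_le (le_max_left _ _)⟩
  set r : (MvPolynomial (Fin n) ℝ) := C R' - nn with hr
  have hU : ¬ IsPreo {p | ∃ t ∈ T, ∃ t' ∈ T, p = t - r * t'} := by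
    intro hU
    obtain ⟨v, hv⟩ := preo_real hU {h, -r} (by
      intro f hf
      rw [Finset.mem_insert, Finset.mem_singleton] at hf
      rcases hf with rfl | rfl
      · exact ⟨f, Th, 0, T0, by ring⟩
      · exact ⟨0, T0, 1, T1, by ring⟩)
    have h1 := hv h (by simp)
    have h2 := hv (-r) (by simp)
    have h3 := hR' v h1
    rw [hr, hnn, map_neg, map_sub, eval_C, map_sum] at h2
    simp only [map_mul, eval_X] at h2
    linarith
  have hneg : ∃ t ∈ T, ∃ t' ∈ T, (-1 : (MvPolynomial (Fin n) ℝ)) = t - r * t' := by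
    by_contra hcon
    apply hU
    refine ⟨?_, ?_, ?_, hcon⟩
    · rintro _ ⟨s, hs, t, ht, rfl⟩ _ ⟨s', hs', t', ht', rfl⟩
      exact ⟨s + s', Tadd _ hs _ hs', t + t', Tadd _ ht _ ht', by ring⟩
    · rintro _ ⟨s, hs, t, ht, rfl⟩ _ ⟨s', hs', t', ht', rfl⟩
      exact ⟨s * s' + r * r * (t * t'), Tadd _ (Tmul _ hs _ hs') _ (Tmul _ (Tsq r) _ (Tmul _ ht _ ht')),
        s * t' + t * s', Tadd _ (Tmul _ hs _ ht') _ (Tmul _ ht _ hs'), by ring⟩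
    · intro a
      exact ⟨a * a, Tsq a, 0, T0, by ring⟩
  obtain ⟨t1, ht1, t2, ht2, e⟩ := hneg
  have hW : IsQM {p | ∃ u ∈ T, ∃ v ∈ T, p = u + r * v} := by
    refine ⟨⟨1, T1, 0, T0, by ring⟩, ?_, ?_⟩
    · rintro _ ⟨s, hs, t, ht, rfl⟩ _ ⟨s', hs', t', ht', rfl⟩
      exact ⟨s + s', Tadd _ hs _ hs', t + t', Tadd _ ht _ ht', by ring⟩
    · rintro a _ ⟨s, hs, t, ht, rfl⟩
      exact ⟨a * a * s, Tmul _ (Tsq a) _ hs, a * a * t, Tmul _ (Tsq a) _ ht, by ring⟩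
  obtain ⟨N, u, hu, v, hv, e2⟩ := hW.arch (N := R') ⟨0, T0, 1, T1, by rw [hr]; ring⟩ t1
  have key : ∀ u ∈ T, ∀ v ∈ T, (1 + t1) * (u + r * v) ∈ T := by
    intro u hu v hv
    have : (1 + t1) * (u + r * v) = (u + t1 * u) + r * r * (t2 * v) := by
      linear_combination (-(r * v)) * e
    rw [this]
    exact Tadd _ (Tadd _ hu _ (Tmul _ ht1 _ hu)) _ (Tmul _ (Tsq r) _ (Tmul _ ht2 _ hv))
  have k1 : C (N + N * N / 4) - t1 ∈ T := by
    have := Tadd _ (key u hu v hv) _ (Tsq (t1 - C (N / 2)))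
    rw [← e2] at this
    convert this using 1
    have h4 : (C (N * N / 4) : (MvPolynomial (Fin n) ℝ)) = C (N / 2) * C (N / 2) := by rw [← C_mul]; congr 1; ring
    have h2 : (C N : (MvPolynomial (Fin n) ℝ)) = 2 * C (N / 2) := by
      rw [← map_ofNat (C : ℝ →+* (MvPolynomial (Fin n) ℝ)) 2, ← C_mul]; congr 1; ring
    rw [C_add, h4, h2]
    ring
  have k2 := key 0 T0 1 T1
  have k3 : C (R' * (1 + (N + N * N / 4))) - nn ∈ T := by
    have := Tadd _ (Tadd _ k2 _ (Tmul _ ht1 _ Tnn)) _ (Tmul _ (TC R' hR'0) _ k1)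
    convert this using 1
    rw [hr, C_mul, C_add, C_1]
    ring
  obtain ⟨s₀, s₁, h0, h1, e3⟩ := k3
  exact ⟨_, s₀, s₁, h0, h1, e3⟩

end putinar

theorem stmt_6 {n l : ℕ} (g : Fin l → MvPolynomial (Fin n) ℝ)
    (K : Set (Fin n → ℝ)) (hKdef : K = {x : Fin n → ℝ | ∀ j, 0 ≤ eval x (g j)})
    (hPut : PutinarProperty g)
    (f : MvPolynomial (Fin n) ℝ) (hf : ∀ x ∈ K, 0 < eval x f) :
    ∃ τ₀ : MvPolynomial (Fin n) ℝ, ∃ τ : Fin l → MvPolynomial (Fin n) ℝ,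
      IsSumSq τ₀ ∧ (∀ j, IsSumSq (τ j)) ∧ f = τ₀ + ∑ j, τ j * g j := by
  classical
  obtain ⟨σ₀, σ, hσ₀, hσ, hcomp⟩ := hPut
  let M : Set (MvPolynomial (Fin n) ℝ) := {p | ∃ τ₀ : MvPolynomial (Fin n) ℝ,
    ∃ τ : Fin l → MvPolynomial (Fin n) ℝ,
      IsSumSq τ₀ ∧ (∀ j, IsSumSq (τ j)) ∧ p = τ₀ + ∑ j, τ j * g j}
  have hM : IsQM M := by
    refine ⟨⟨1, 0, IsSumSq.one, fun _ => IsSumSq.zero, by simp⟩, ?_, ?_⟩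
    · rintro _ ⟨s, t, hs, ht, rfl⟩ _ ⟨s', t', hs', ht', rfl⟩
      refine ⟨s + s', t + t', hs.add hs', fun j => (ht j).add (ht' j), ?_⟩
      simp only [Pi.add_apply, add_mul, Finset.sum_add_distrib]
      ring
    · rintro a _ ⟨s, t, hs, ht, rfl⟩
      refine ⟨a * a * s, fun j => a * a * t j, (IsSumSq.mul_self a).mul hs,
        fun j => (IsSumSq.mul_self a).mul (ht j), ?_⟩
      rw [mul_add, Finset.mul_sum]
      simp only [mul_assoc]
  have hgM : ∀ j, g j ∈ M := by
    intro j
    refine ⟨0, Pi.single j 1, IsSumSq.zero, fun i => ?_, ?_⟩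
    · by_cases h : i = j
      · subst h; simp
      · rw [Pi.single_eq_of_ne h]; exact IsSumSq.zero
    · rw [Finset.sum_eq_single j]
      · simp
      · intro i _ hi; rw [Pi.single_eq_of_ne hi, zero_mul]
      · simp
  set h := σ₀ + ∑ j, σ j * g j with hh
  have hhM : h ∈ M := ⟨σ₀, σ, hσ₀, hσ, hh⟩
  obtain ⟨R, hR⟩ : ∃ R : ℝ, ∀ x : Fin n → ℝ, 0 ≤ eval x h → ∑ i, x i * x i < R := by
    have hc : Continuous (fun x : Fin n → ℝ => ∑ i, x i * x i) := by fun_prop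
    obtain ⟨B, hB⟩ := (hcomp.image hc).bddAbove
    refine ⟨B + 1, fun x hx => ?_⟩
    have := hB ⟨x, hx, rfl⟩
    exact lt_of_le_of_lt this (lt_add_one B)
  obtain ⟨N, s₀, s₁, h0, h1, e⟩ := wormann h R hR
  have hN : C N - ∑ i, X i * X i ∈ M := by
    rw [e]
    exact hM.add _ (hM.sos h0) _ (hM.sos_mul h1 hhM)
  refine arch_putinar hM (hM.arch hN) f (fun x hx => hf x ?_)
  rw [hKdef]
  exact fun j => hx _ (hgM j)
end

section
/- If every g_j has total degree at most 1 (i.e., all defining polynomials are affine) and K is compact, then K with defining polynomials g₁,…,g_l satisfies Putinar's property. -/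
open MvPolynomial

lemma aux_farkas {V ι : Type*} [AddCommGroup V] [Module ℝ V] [DecidableEq ι] (s : Finset ι) :
    ∀ (a : ι → V →ₗ[ℝ] ℝ) (b : V →ₗ[ℝ] ℝ),
      (∀ x, (∀ j ∈ s, a j x ≤ 0) → b x ≤ 0) →
      ∃ w : ι → ℝ, (∀ j, 0 ≤ w j) ∧ ∀ x, b x = ∑ j ∈ s, w j * a j x := by
  induction s using Finset.induction_on with
  | empty =>
    intro a b h
    refine ⟨fun _ => 0, fun _ => le_rfl, fun x => ?_⟩
    have h1 := h x (by simp)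
    have h2 := h (-x) (by simp)
    simp only [map_neg] at h2
    simp only [Finset.sum_empty]
    linarith
  | insert m s hm ih =>
    intro a b h
    by_cases hb : ∀ x, (∀ j ∈ s, a j x ≤ 0) → b x ≤ 0
    · obtain ⟨w, hw, hwx⟩ := ih a b hb
      refine ⟨fun j => if j = m then 0 else w j, fun j => ?_, fun x => ?_⟩
      · dsimp only
        split_ifs
        · exact le_rfl
        · exact hw j
      · rw [Finset.sum_insert hm, hwx x]
        simp only [if_true, zero_mul, zero_add]
        refine Finset.sum_congr rfl fun j hj => ?_
        rw [if_neg (ne_of_mem_of_not_mem hj hm)]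
    · push Not at hb
      obtain ⟨z, hz, hbz⟩ := hb
      have hmz : 0 < a m z := by
        by_contra hcon
        have := h z (by
          intro j hj
          rcases Finset.mem_insert.1 hj with rfl | hj
          · exact not_lt.1 hcon
          · exact hz j hj)
        linarith
      obtain ⟨y, hy⟩ : ∃ y, y = (a m z)⁻¹ • z := ⟨_, rfl⟩
      have hmy : a m y = 1 := by
        rw [hy, map_smul, smul_eq_mul, inv_mul_cancel₀ hmz.ne']
      have hay : ∀ j ∈ s, a j y ≤ 0 := by
        intro j hj
        rw [hy, map_smul, smul_eq_mul]
        exact mul_nonpos_of_nonneg_of_nonpos (inv_nonneg.2 hmz.le) (hz j hj)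
      have hby : 0 < b y := by
        rw [hy, map_smul, smul_eq_mul]
        positivity
      obtain ⟨w, hw, hwx⟩ := ih (fun j => a j - (a j y) • a m) (b - (b y) • a m) (by
        intro x hx
        have := h (x - (a m x) • y) (by
          intro j hj
          rcases Finset.mem_insert.1 hj with rfl | hj
          · simp [hmy]
          · have := hx j hj
            simp only [LinearMap.sub_apply, LinearMap.smul_apply, smul_eq_mul] at this
            simp only [map_sub, map_smul, smul_eq_mul]
            linarith)
        simp only [map_sub, map_smul, smul_eq_mul] at this
        simp only [LinearMap.sub_apply, LinearMap.smul_apply, smul_eq_mul]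
        linarith)
      refine ⟨fun j => if j = m then b y - ∑ i ∈ s, w i * a i y else w j, fun j => ?_, fun x => ?_⟩
      · dsimp only
        split_ifs
        · have : ∑ i ∈ s, w i * a i y ≤ 0 :=
            Finset.sum_nonpos fun i hi => mul_nonpos_of_nonneg_of_nonpos (hw i) (hay i hi)
          linarith
        · exact hw j
      · rw [Finset.sum_insert hm]
        have e : ∑ j ∈ s, (if j = m then b y - ∑ i ∈ s, w i * a i y else w j) * a j x
            = ∑ j ∈ s, w j * a j x := by
          refine Finset.sum_congr rfl fun j hj => ?_
          rw [if_neg (ne_of_mem_of_not_mem hj hm)]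
        rw [e]
        simp only [if_true]
        have := hwx x
        simp only [LinearMap.sub_apply, LinearMap.smul_apply, smul_eq_mul, mul_sub,
          Finset.sum_sub_distrib] at this
        rw [sub_mul, Finset.sum_mul]
        have e2 : ∑ j ∈ s, w j * (a j y * a m x) = ∑ j ∈ s, w j * a j y * a m x :=
          Finset.sum_congr rfl fun j _ => by ring
        linarith

lemma aux_affine {n : ℕ} (g : MvPolynomial (Fin n) ℝ) (hg : g.totalDegree ≤ 1) :
    ∃ (L : (Fin n → ℝ) →ₗ[ℝ] ℝ) (b : ℝ), ∀ x, eval x g = L x + b := by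
  have key : ∀ d ∈ g.support, ∃ (L : (Fin n → ℝ) →ₗ[ℝ] ℝ) (b : ℝ),
      ∀ x : Fin n → ℝ, coeff d g * ∏ i, x i ^ d i = L x + b := by
    intro d hd
    have h1 : d.degree ≤ 1 := by
      have := le_totalDegree hd
      have h3 : d.degree = d.sum fun _ e => e := rfl
      omega
    by_cases h0 : d = 0
    · exact ⟨0, coeff d g, fun x => by simp [h0]⟩
    · obtain ⟨i, hi⟩ : ∃ i, d i ≠ 0 := by
        by_contra hcon
        push Not at hcon
        exact h0 (Finsupp.ext hcon)
      have hs : d = Finsupp.single i 1 := by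
        rw [Finsupp.degree_eq_sum] at h1
        ext k
        have hdi : d i = 1 := by
          have := Finset.single_le_sum (f := fun i => d i) (fun _ _ => Nat.zero_le _)
            (Finset.mem_univ i)
          omega
        by_cases hk : k = i
        · subst hk; simp [hdi]
        · rw [Finsupp.single_eq_of_ne hk]
          have := Finset.add_sum_erase Finset.univ (fun i => d i) (Finset.mem_univ i)
          have h4 := Finset.single_le_sum (f := fun i => d i) (s := Finset.univ.erase i)
            (fun _ _ => Nat.zero_le _) (Finset.mem_erase.2 ⟨hk, Finset.mem_univ k⟩)
          omega
      refine ⟨coeff d g • LinearMap.proj i, 0, fun x => ?_⟩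
      have : ∏ k, x k ^ d k = x i := by
        rw [Finset.prod_eq_single i]
        · rw [hs]; simp
        · intro k _ hk
          rw [hs, Finsupp.single_eq_of_ne hk, pow_zero]
        · simp
      rw [this]
      simp
  choose! L b h using key
  refine ⟨∑ d ∈ g.support, L d, ∑ d ∈ g.support, b d, fun x => ?_⟩
  rw [eval_eq', LinearMap.sum_apply, ← Finset.sum_add_distrib]
  exact Finset.sum_congr rfl fun d hd => h d hd x

lemma aux_isSumSq_C {n : ℕ} (r : ℝ) (hr : 0 ≤ r) : IsSumSq (C r : MvPolynomial (Fin n) ℝ) := by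
  have : (C r : MvPolynomial (Fin n) ℝ) = C (Real.sqrt r) * C (Real.sqrt r) := by
    rw [← C_mul, Real.mul_self_sqrt hr]
  rw [this]
  exact IsSumSq.mul_self _

theorem stmt_8 {n l : ℕ} (g : Fin l → MvPolynomial (Fin n) ℝ)
    (haff : ∀ j, (g j).totalDegree ≤ 1)
    (hcomp : IsCompact {x : Fin n → ℝ | ∀ j, 0 ≤ eval x (g j)}) :
    PutinarProperty g := by
  choose L b hL using fun j => aux_affine (g j) (haff j)
  rcases Set.eq_empty_or_nonempty {x : Fin n → ℝ | ∀ j, 0 ≤ eval x (g j)} with hK | ⟨x₀, hx₀⟩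
  · obtain ⟨w, hw, hwx⟩ := aux_farkas (V := (Fin n → ℝ) × ℝ) (Finset.univ : Finset (Fin l))
      (fun j => -((L j).comp (LinearMap.fst ℝ _ _) + b j • LinearMap.snd ℝ _ _))
      (LinearMap.snd ℝ _ _) (by
        rintro ⟨x, t⟩ hx
        by_contra ht
        simp only [LinearMap.snd_apply, not_le] at ht
        have : t⁻¹ • x ∈ {x : Fin n → ℝ | ∀ j, 0 ≤ eval x (g j)} := by
          intro j
          have := hx j (Finset.mem_univ j)
          simp only [LinearMap.neg_apply, LinearMap.add_apply, LinearMap.comp_apply,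
            LinearMap.fst_apply, LinearMap.smul_apply, LinearMap.snd_apply, smul_eq_mul] at this
          rw [hL, map_smul, smul_eq_mul]
          have e : t⁻¹ * L j x + b j = t⁻¹ * (L j x + b j * t) := by field_simp
          rw [e]
          exact mul_nonneg (inv_nonneg.2 ht.le) (by linarith)
        rw [hK] at this
        exact this)
    refine ⟨0, fun j => C (w j), IsSumSq.zero, fun j => aux_isSumSq_C _ (hw j), ?_⟩
    convert isCompact_empty (X := Fin n → ℝ)
    ext x
    have := hwx (x, 1)
    simp only [LinearMap.neg_apply, LinearMap.add_apply, LinearMap.comp_apply,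
      LinearMap.fst_apply, LinearMap.smul_apply, LinearMap.snd_apply, smul_eq_mul, mul_one,
      mul_neg, Finset.sum_neg_distrib] at this
    simp only [map_add, map_zero, zero_add, map_sum, map_mul, eval_C, hL, Set.mem_setOf_eq,
      Set.mem_empty_iff_false, iff_false, not_le]
    linarith
  · have hrec : ∀ d, (∀ j, 0 ≤ L j d) → d = 0 := by
      intro d hd
      by_contra hne
      obtain ⟨R, hR⟩ := hcomp.isBounded.exists_norm_le
      have hpos : 0 < ‖d‖ := norm_pos_iff.2 hne
      have hR0 := (norm_nonneg _).trans (hR x₀ hx₀)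
      set t := (R + ‖x₀‖ + 1) / ‖d‖ with ht
      have ht0 : 0 ≤ t := by positivity
      have hmem : x₀ + t • d ∈ {x : Fin n → ℝ | ∀ j, 0 ≤ eval x (g j)} := by
        intro j
        have h1 := hx₀ j
        rw [hL] at h1 ⊢
        rw [map_add, map_smul, smul_eq_mul]
        have := mul_nonneg ht0 (hd j)
        linarith
      have h2 := hR _ hmem
      have h3 : ‖t • d‖ ≤ ‖x₀ + t • d‖ + ‖x₀‖ := by
        have := norm_sub_le (x₀ + t • d) x₀
        rwa [add_sub_cancel_left] at this
      rw [norm_smul, Real.norm_of_nonneg ht0, ht, div_mul_cancel₀ _ hpos.ne'] at h3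
      linarith
    obtain ⟨μ, hμ, hμx⟩ := aux_farkas (Finset.univ : Finset (Fin l)) (fun j => -L j) (∑ j, L j) (by
      intro d hd
      have : d = 0 := hrec d fun j => by simpa using hd j (Finset.mem_univ j)
      simp [this])
    obtain ⟨w, hwdef⟩ : ∃ w : Fin l → ℝ, w = fun j => 1 + μ j := ⟨_, rfl⟩
    have hw : ∀ j, 0 < w j := fun j => by rw [hwdef]; have := hμ j; dsimp only; linarith
    have hw0 : ∀ d, ∑ j, w j * L j d = 0 := by
      intro d
      have := hμx d
      simp only [LinearMap.sum_apply, LinearMap.neg_apply, mul_neg, Finset.sum_neg_distrib] at this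
      simp only [hwdef, add_mul, one_mul, Finset.sum_add_distrib]
      linarith
    obtain ⟨c, hc⟩ : ∃ c, c = ∑ j, w j * b j := ⟨_, rfl⟩
    have hcx : ∀ x, ∑ j, w j * (L j x + b j) = c := by
      intro x
      simp only [mul_add, Finset.sum_add_distrib, hw0, zero_add, hc]
    obtain ⟨M, hM⟩ : ∃ M, M = (c + 1) / 2 := ⟨_, rfl⟩
    refine ⟨0, fun j => C (w j) * ((C (w j) * g j - C M) * (C (w j) * g j - C M) +
      ∑ i ∈ Finset.univ.erase j, (C (w i) * g i) * (C (w i) * g i)), IsSumSq.zero,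
      fun j => (aux_isSumSq_C _ (hw j).le).mul ((IsSumSq.mul_self _).add
        (IsSumSq.sum_mul_self _ _)), ?_⟩
    have hset : ∀ x, eval x (0 + ∑ j, (C (w j) * ((C (w j) * g j - C M) * (C (w j) * g j - C M) +
      ∑ i ∈ Finset.univ.erase j, (C (w i) * g i) * (C (w i) * g i))) * g j)
        = M ^ 2 * c - ∑ j, (w j * (L j x + b j)) ^ 2 := by
      intro x
      simp only [zero_add, map_sum, map_mul, map_add, map_sub, eval_C, hL]
      have hx := hcx x
      generalize hS : ∑ j, (w j * (L j x + b j)) ^ 2 = S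
      have : ∀ j, w j * ((w j * (L j x + b j) - M) * (w j * (L j x + b j) - M) +
          ∑ i ∈ Finset.univ.erase j, w i * (L i x + b i) * (w i * (L i x + b i))) * (L j x + b j)
          = (S + M ^ 2) * (w j * (L j x + b j)) - 2 * M * (w j * (L j x + b j)) ^ 2 := by
        intro j
        have h5 := Finset.add_sum_erase Finset.univ (fun j => (w j * (L j x + b j)) ^ 2)
          (Finset.mem_univ j)
        simp only [pow_two (w _ * _)] at h5 hS
        rw [hS] at h5
        rw [← h5]
        ring
      simp only [this]
      rw [Finset.sum_sub_distrib, ← Finset.mul_sum, ← Finset.mul_sum, hx, hS, hM]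
      ring
    simp only [hset]
    set φ : (Fin n → ℝ) →ₗ[ℝ] (Fin l → ℝ) := LinearMap.pi L with hφ
    have hinj : LinearMap.ker φ = ⊥ := by
      rw [LinearMap.ker_eq_bot']
      intro d hd
      refine hrec d fun j => ?_
      have := congrFun hd j
      simp only [hφ, LinearMap.pi_apply, Pi.zero_apply] at this
      exact this.ge
    have hemb := LinearMap.isClosedEmbedding_of_injective hinj
    have hbox : IsCompact (φ ⁻¹' Set.Icc (fun j => -((M ^ 2 * c + 1) / w j) - b j)
        (fun j => (M ^ 2 * c + 1) / w j - b j)) := hemb.isCompact_preimage isCompact_Icc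
    refine hbox.of_isClosed_subset ?_ ?_
    · refine isClosed_le continuous_const ?_
      have : ∀ j, Continuous (L j) := fun j => LinearMap.continuous_of_finiteDimensional _
      fun_prop
    · intro x hx
      simp only [Set.mem_setOf_eq] at hx
      have hj : ∀ j, |L j x + b j| ≤ (M ^ 2 * c + 1) / w j := by
        intro j
        have := Finset.single_le_sum (f := fun j => (w j * (L j x + b j)) ^ 2)
          (fun _ _ => sq_nonneg _) (Finset.mem_univ j)
        rw [le_div_iff₀ (hw j)]
        have h6 : |w j * (L j x + b j)| ≤ M ^ 2 * c + 1 := by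
          rw [abs_le]
          constructor <;> nlinarith
        rw [abs_mul, abs_of_pos (hw j)] at h6
        linarith
      constructor
      · intro j
        have := (abs_le.1 (hj j)).1
        simp only [hφ, LinearMap.pi_apply]
        linarith
      · intro j
        have := (abs_le.1 (hj j)).2
        simp only [hφ, LinearMap.pi_apply]
        linarith
end

section
/- Let μ be a finite Borel measure on ℝⁿ with compact support and let g ∈ ℝ[x₁,…,xₙ]. If ∫ g(x) p(x)² dμ(x) ≥ 0 for every polynomial p ∈ ℝ[x₁,…,xₙ], then g(x) ≥ 0 for every x in the support of μ. -/
open MeasureTheory MvPolynomial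

/-- The support of a Borel measure `μ` on `ℝⁿ`: the smallest closed set whose
complement has `μ`-measure zero. -/
def measureSupport {n : ℕ} (μ : Measure (Fin n → ℝ)) : Set (Fin n → ℝ) :=
  ⋂₀ {C : Set (Fin n → ℝ) | IsClosed C ∧ μ Cᶜ = 0}

theorem aux_approx {n : ℕ} (C : Set (Fin n → ℝ)) (hC : IsCompact C) (s : C(Fin n → ℝ, ℝ))
    (ε : ℝ) (hε : 0 < ε) :
    ∃ p : MvPolynomial (Fin n) ℝ, ∀ x ∈ C, ‖eval x p - s x‖ < ε := by
  let c : Fin n → C(Fin n → ℝ, ℝ) := fun i => ⟨fun x => x i, continuous_apply i⟩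
  let A : Subalgebra ℝ C(Fin n → ℝ, ℝ) := (aeval c : MvPolynomial (Fin n) ℝ →ₐ[ℝ] _).range
  have hev : ∀ (p : MvPolynomial (Fin n) ℝ) (x : Fin n → ℝ), (aeval c p) x = eval x p := by
    intro p x
    induction p using MvPolynomial.induction_on with
    | C a => simp
    | add p q hp hq => simp [hp, hq]
    | mul_X p i hp => simp [hp, c]
  have hA : A.SeparatesPoints := by
    intro x y hxy
    obtain ⟨i, hi⟩ := Function.ne_iff.mp hxy
    refine ⟨c i, ⟨c i, ⟨X i, by simp⟩, rfl⟩, hi⟩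
  obtain ⟨_, ⟨p, rfl⟩, hg⟩ :=
    ContinuousMap.exists_mem_subalgebra_near_continuous_of_isCompact_of_separatesPoints
      hA s hC hε
  refine ⟨p, fun x hx => ?_⟩
  have := hg x hx
  rw [← hev]
  exact this

theorem stmt_13 {n : ℕ} (μ : Measure (Fin n → ℝ)) [IsFiniteMeasure μ]
    (hsupp : ∃ C : Set (Fin n → ℝ), IsCompact C ∧ μ Cᶜ = 0)
    (g : MvPolynomial (Fin n) ℝ)
    (hpos : ∀ p : MvPolynomial (Fin n) ℝ, 0 ≤ ∫ x, eval x g * (eval x p) ^ 2 ∂μ) :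
    ∀ x ∈ measureSupport μ, 0 ≤ eval x g := by
  obtain ⟨C, hC, hC0⟩ := hsupp
  have hae : ∀ᵐ x ∂μ, x ∈ C := hC0
  have hcont : ∀ p : MvPolynomial (Fin n) ℝ, Continuous fun x => eval x p :=
    fun p => MvPolynomial.continuous_eval p
  have hg := hcont g
  let s : C(Fin n → ℝ, ℝ) := ⟨fun x => √(max (-eval x g) 0), by fun_prop⟩
  have hs2 : ∀ x, (s x) ^ 2 = max (-eval x g) 0 := fun x => Real.sq_sqrt (le_max_right _ _)
  choose p hp using fun m : ℕ => aux_approx C hC s (1 / ((m : ℝ) + 1)) (by positivity)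
  obtain ⟨M, hM⟩ := hC.exists_bound_of_continuousOn hg.continuousOn
  obtain ⟨S, hS⟩ := hC.exists_bound_of_continuousOn s.continuous.continuousOn
  have hlim : Filter.Tendsto (fun m => ∫ x, eval x g * (eval x (p m)) ^ 2 ∂μ) Filter.atTop
      (nhds (∫ x, eval x g * (s x) ^ 2 ∂μ)) := by
    refine tendsto_integral_of_dominated_convergence (fun _ => M * (S + 1) ^ 2)
      (fun m => (hg.mul ((hcont (p m)).pow 2)).aestronglyMeasurable)
      (integrable_const _) (fun m => ?_) ?_
    · filter_upwards [hae] with x hx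
      rw [norm_mul, norm_pow]
      have h1 := hM x hx
      have h2 := hS x hx
      have h3 := hp m x hx
      have h4 : 1 / ((m : ℝ) + 1) ≤ 1 := by
        rw [div_le_one (by positivity)]
        linarith [(Nat.cast_nonneg m : (0 : ℝ) ≤ m)]
      have h5 : ‖eval x (p m)‖ ≤ S + 1 := by
        have := norm_le_norm_add_norm_sub' (eval x (p m)) (s x)
        linarith
      have : 0 ≤ M := (norm_nonneg _).trans h1
      gcongr
    · filter_upwards [hae] with x hx
      have : Filter.Tendsto (fun m => eval x (p m)) Filter.atTop (nhds (s x)) := by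
        rw [tendsto_iff_norm_sub_tendsto_zero]
        exact squeeze_zero (fun _ => norm_nonneg _) (fun m => (hp m x hx).le)
          tendsto_one_div_add_atTop_nhds_zero_nat
      exact (this.pow 2).const_mul _
  have h0 := ge_of_tendsto' hlim (fun m => hpos (p m))
  have heq : ∀ x, eval x g * (s x) ^ 2 = -(max (-eval x g) 0) ^ 2 := by
    intro x
    rw [hs2]
    rcases le_total (-eval x g) 0 with h | h
    · simp [max_eq_right h]
    · rw [max_eq_left h]; ring
  simp_rw [heq] at h0
  rw [integral_neg] at h0
  have hint : Integrable (fun x => (max (-eval x g) 0) ^ 2) μ := by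
    refine Integrable.of_bound (C := M ^ 2)
      (by fun_prop : Continuous fun x => (max (-eval x g) 0) ^ 2).aestronglyMeasurable ?_
    filter_upwards [hae] with x hx
    have h1 := hM x hx
    rw [Real.norm_eq_abs] at h1
    rw [norm_pow, Real.norm_eq_abs, abs_of_nonneg (le_max_right _ _)]
    have : max (-eval x g) 0 ≤ M :=
      max_le ((neg_le_abs _).trans h1) ((abs_nonneg _).trans h1)
    gcongr
  have hz := (integral_eq_zero_iff_of_nonneg (fun x => sq_nonneg _) hint).1
    (le_antisymm (by linarith) (integral_nonneg fun x => sq_nonneg _))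
  intro x hx
  refine Set.mem_sInter.1 hx {y | 0 ≤ eval y g} ⟨isClosed_le continuous_const hg, ?_⟩
  change ∀ᵐ y ∂μ, 0 ≤ eval y g
  filter_upwards [hz] with y hy
  have h1 : max (-eval y g) 0 = 0 := by simpa using hy
  have := le_max_left (-eval y g) 0
  linarith
end
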